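/- arXiv:1607.08576 — 2 statements merged into one kernel-verified Lean document; each statement's English description precedes it below -/
import Mathlib

section
/- For any sequence x_1,...,x_N in 𝕋^d, the isotropic discrepancy J_N and the (box) discrepancy D_N satisfy D_N ≤ J_N ≤ (4d√d + 1)·D_N^{1/d}. -/
/-!
Let `C` be a convex subset of the unit cube. For the grid of mesh `1 / r`, sandwich `C` between the
union of the cells it contains and the union of the cells it meets. By convexity either union meets
every column of cells in a single box, so it is a disjoint union of at most `r^(d-1)` boxes, and its
empirical frequency differs from its volume by at most `r^(d-1) D_N`.

Both unions differ from `C` only within sup-distance `1 / r` of the boundary. Thicken or erode a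
convex set by a segment of half-length `ε` parallel to an axis: it meets each line in that direction
in an interval, so its volume inside the unit cube changes by at most `2 ε`. Doing this along the
`d` axes in turn costs at most `2 d / r`. Hence `J_N ≤ 2 d / r + r^(d-1) D_N` for every `r`, and
`r = ⌊D_N^(-1/d)⌋` (or `r → ∞` if `D_N = 0`) gives the bound, even with the constant `4 d + 1`.
-/

open MeasureTheory

/-- The box (extreme) discrepancy of a finite sequence `x 0, ..., x (N-1)` in `[0,1)^d`:
sup over axis-parallel boxes `∏ [a i, b i)` of `|A(C)/N - vol C|`. -/
noncomputable def boxDiscrepancy (d N : ℕ) (x : Fin N → (Fin d → ℝ)) : ℝ :=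
  sSup {r : ℝ | ∃ a b : Fin d → ℝ,
    (∀ i, 0 ≤ a i ∧ a i ≤ b i ∧ b i ≤ 1) ∧
    r = |(∑ n : Fin N, Set.indicator {y | ∀ i, a i ≤ y i ∧ y i < b i}
            (fun _ => (1 : ℝ)) (x n)) / N - ∏ i, (b i - a i)|}

/-- The isotropic discrepancy of a finite sequence `x 0, ..., x (N-1)` in `[0,1)^d`:
sup over convex subsets `C ⊆ [0,1]^d` of `|A(C)/N - vol C|`. -/
noncomputable def isotropicDiscrepancy (d N : ℕ) (x : Fin N → (Fin d → ℝ)) : ℝ :=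
  sSup {r : ℝ | ∃ C : Set (Fin d → ℝ), Convex ℝ C ∧
    C ⊆ {y | ∀ i, 0 ≤ y i ∧ y i ≤ 1} ∧
    r = |(∑ n : Fin N, Set.indicator C (fun _ => (1 : ℝ)) (x n)) / N -
      (volume C).toReal|}

open Set Function
open scoped ENNReal Pointwise

section Intervals

-- Two points of this set are at most `|a|` apart: otherwise `F` would contain the translate by `a`
-- of one of them, which lies between the two.
theorem volume_sep_add_notMem_le {F : Set ℝ} (hF : F.OrdConnected) (a : ℝ) :
    volume {t ∈ F | t + a ∉ F} ≤ ENNReal.ofReal |a| := by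
  refine (Real.volume_le_diam _).trans (Metric.ediam_le fun s hs t ht ↦ ?_)
  rw [edist_dist, Real.dist_eq]
  refine ENNReal.ofReal_le_ofReal (not_lt.1 fun hlt ↦ ?_)
  rcases abs_cases a with ⟨ha, _⟩ | ⟨ha, _⟩ <;> rcases abs_cases (s - t) with ⟨hst, _⟩ | ⟨hst, _⟩
  · exact ht.2 (hF.out ht.1 hs.1 ⟨by linarith, by linarith⟩)
  · exact hs.2 (hF.out hs.1 ht.1 ⟨by linarith, by linarith⟩)
  · exact hs.2 (hF.out ht.1 hs.1 ⟨by linarith, by linarith⟩)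
  · exact ht.2 (hF.out hs.1 ht.1 ⟨by linarith, by linarith⟩)

theorem ordConnected_image_floor {F : Set ℝ} (hF : F.OrdConnected) :
    (Int.floor '' F).OrdConnected := by
  refine ordConnected_def.2 ?_
  rintro _ ⟨s, hs, rfl⟩ _ ⟨t, ht, rfl⟩ b ⟨hsb, hbt⟩
  rcases hsb.eq_or_lt with rfl | hsb
  · exact ⟨s, hs, rfl⟩
  · exact ⟨b, hF.out hs ht ⟨(Int.floor_lt.1 hsb).le, Int.le_floor.1 hbt⟩, Int.floor_intCast b⟩

theorem exists_eq_Ico_of_ordConnected {J : Set ℤ} (hJ : J.OrdConnected) {l u : ℤ} (hlu : l ≤ u)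
    (hJlu : J ⊆ Ico l u) : ∃ α β, l ≤ α ∧ α ≤ β ∧ β ≤ u ∧ J = Ico α β := by
  rcases J.eq_empty_or_nonempty with rfl | hne
  · exact ⟨l, l, le_rfl, le_rfl, hlu, (Ico_self l).symm⟩
  have hfin : J.Finite := (finite_Ico l u).subset hJlu
  obtain ⟨α, hα, hmin⟩ := J.exists_min_image id hfin hne
  obtain ⟨β, hβ, hmax⟩ := J.exists_max_image id hfin hne
  refine ⟨α, β + 1, (hJlu hα).1, (hmin β hβ).trans (Int.le_add_one le_rfl), (hJlu hβ).2, ?_⟩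
  ext j
  exact ⟨fun hj ↦ ⟨hmin j hj, Int.lt_add_one_iff.2 (hmax j hj)⟩,
    fun hj ↦ hJ.out hα hβ ⟨hj.1, Int.lt_add_one_iff.1 hj.2⟩⟩

end Intervals

variable {ι : Type*}

section AxisErosion

variable [DecidableEq ι] {C : Set (ι → ℝ)} {k : ι} {ε : ℝ}

theorem ordConnected_setOf_add_single_mem (hC : Convex ℝ C) (y : ι → ℝ) (k : ι) :
    {t | y + Pi.single k t ∈ C}.OrdConnected :=
  ((hC.translate_preimage_right y).linear_preimage (.single ℝ (fun _ ↦ ℝ) k)).ordConnected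

/-- The segment from `-ε` to `ε` on the `k`-th coordinate axis. Finite sums of such segments are the
boxes by which convex sets are thickened and eroded. -/
def axisSegment (k : ι) (ε : ℝ) : Set (ι → ℝ) := Pi.single k '' Icc (-ε) ε

theorem convex_axisSegment : Convex ℝ (axisSegment k ε) :=
  (convex_Icc (-ε) ε).linear_image (.single ℝ (fun _ ↦ ℝ) k)

theorem isCompact_axisSegment : IsCompact (axisSegment k ε) :=
  isCompact_Icc.image (continuous_single (A := fun _ ↦ ℝ) k)

theorem mem_sum_axisSegment [Fintype ι] {v : ι → ℝ} (hv : ∀ i, |v i| ≤ ε) :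
    v ∈ ∑ i, axisSegment i ε := by
  rw [← Finset.univ_sum_single v]
  exact Set.finsetSum_mem_finsetSum _ _ _ fun i _ ↦ mem_image_of_mem _ (abs_le.1 (hv i))

/-- The erosion of `C` by `axisSegment k ε`: the set of `y` with `y + axisSegment k ε ⊆ C`. Only the
two endpoints are required to lie in `C`, which is enough for convex `C`. -/
def axisErosion (k : ι) (ε : ℝ) (C : Set (ι → ℝ)) : Set (ι → ℝ) :=
  {y | y + Pi.single k ε ∈ C} ∩ {y | y + Pi.single k (-ε) ∈ C}

theorem convex_axisErosion (hC : Convex ℝ C) : Convex ℝ (axisErosion k ε C) :=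
  (hC.translate_preimage_left _).inter (hC.translate_preimage_left _)

theorem measurableSet_axisErosion (hC : MeasurableSet C) : MeasurableSet (axisErosion k ε C) :=
  (measurable_add_const _ hC).inter (measurable_add_const _ hC)

theorem add_mem_of_mem_axisErosion (hC : Convex ℝ C) {y v : ι → ℝ} (hy : y ∈ axisErosion k ε C)
    (hv : v ∈ axisSegment k ε) : y + v ∈ C := by
  obtain ⟨t, ht, rfl⟩ := hv
  exact (ordConnected_setOf_add_single_mem hC y k).out hy.2 hy.1 ht

theorem axisErosion_add_axisSegment_subset (hC : Convex ℝ C) :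
    axisErosion k ε (C + axisSegment k ε) ⊆ C := by
  rintro y ⟨⟨c, hc, _, ⟨s, hs, rfl⟩, hcs⟩, ⟨b, hb, _, ⟨t, ht, rfl⟩, hbt⟩⟩
  have hc' : y + Pi.single k (ε - s) ∈ C := by
    rwa [Pi.single_sub, ← add_sub_assoc, ← hcs, add_sub_cancel_right]
  have hb' : y + Pi.single k (-ε - t) ∈ C := by
    rwa [Pi.single_sub, ← add_sub_assoc, ← hbt, add_sub_cancel_right]
  simpa using (ordConnected_setOf_add_single_mem hC y k).out hb' hc'
    (show (0 : ℝ) ∈ Icc (-ε - t) (ε - s) from ⟨by linarith [ht.1], by linarith [hs.2]⟩)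

end AxisErosion

section GridIndex

/-- The index of the cell `∏ i, [z i / r, (z i + 1) / r)` of the grid of mesh `1 / r` containing
`p`. -/
noncomputable def gridIndex (r : ℕ) (p : ι → ℝ) : ι → ℤ := fun i ↦ ⌊r * p i⌋

theorem abs_sub_le_of_gridIndex_eq {r : ℕ} (hr : 0 < r) {p q : ι → ℝ}
    (h : gridIndex r p = gridIndex r q) (i : ι) : |p i - q i| ≤ 1 / r := by
  have hr' : (0 : ℝ) < r := Nat.cast_pos.2 hr
  have hlt := Int.abs_sub_lt_one_of_floor_eq_floor (congrFun h i)
  rw [← mul_sub, abs_mul, Nat.abs_cast] at hlt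
  exact (le_div_iff₀' hr').2 hlt.le

theorem preimage_gridIndex_pi_Ico {r : ℕ} (hr : 0 < r) (A B : ι → ℤ) :
    gridIndex r ⁻¹' (univ.pi fun i ↦ Ico (A i) (B i)) =
      univ.pi fun i ↦ Ico (A i / r : ℝ) (B i / r) := by
  have hr' : (0 : ℝ) < r := Nat.cast_pos.2 hr
  ext y
  simp only [gridIndex, mem_preimage, mem_univ_pi, mem_Ico, Int.le_floor, Int.floor_lt,
    div_le_iff₀' hr', lt_div_iff₀' hr']

variable [DecidableEq ι] {C : Set (ι → ℝ)} {k : ι}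

theorem gridIndex_add_single {r : ℕ} (hr : 0 < r) (p : ι → ℝ) (m : ℤ) :
    gridIndex r (p + Pi.single k (m / r : ℝ)) = gridIndex r p + Pi.single k m := by
  have hr' : (r : ℝ) ≠ 0 := Nat.cast_ne_zero.2 hr.ne'
  ext i
  rcases eq_or_ne i k with rfl | hi
  · simp [gridIndex, mul_add, mul_div_cancel₀ _ hr']
  · simp [gridIndex, hi]

theorem ordConnected_fibre_image_gridIndex (hC : Convex ℝ C) (r : ℕ) (z : ι → ℤ) :
    {j | update z k j ∈ gridIndex r '' C}.OrdConnected := by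
  let slab (i : ι) : Set (ι → ℝ) := {p | (r : ℝ) * p i ∈ Ico (z i : ℝ) (z i + 1)}
  have hslab (i : ι) : Convex ℝ (slab i) :=
    (convex_Ico (z i : ℝ) (z i + 1)).linear_preimage
      ((r : ℝ) • (LinearMap.proj i : (ι → ℝ) →ₗ[ℝ] ℝ))
  have hcol : Convex ℝ (C ∩ ⋂ i ≠ k, slab i) := hC.inter (convex_iInter₂ fun i _ ↦ hslab i)
  have himage : {j | update z k j ∈ gridIndex r '' C} =
      Int.floor '' ((fun p : ι → ℝ ↦ (r : ℝ) * p k) '' (C ∩ ⋂ i ≠ k, slab i)) := by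
    ext j
    simp only [mem_ofPred_eq, mem_image, exists_exists_and_eq_and, mem_inter_iff, mem_iInter, slab,
      ← Int.floor_eq_iff, mem_Ico, eq_update_iff, gridIndex]
    grind
  rw [himage]
  exact ordConnected_image_floor
    (hcol.linear_image ((r : ℝ) • LinearMap.proj k)).ordConnected

theorem ordConnected_fibre_kernImage_gridIndex (hC : Convex ℝ C) {r : ℕ} (hr : 0 < r)
    (z : ι → ℤ) : {j | update z k j ∈ kernImage (gridIndex r) C}.OrdConnected := by
  refine ordConnected_def.2 fun a ha c hc b hb p hp ↦ ?_
  have hshift (e : ℤ) : gridIndex r (p + Pi.single k (((e - b : ℤ) : ℝ) / r)) = update z k e := by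
    rw [gridIndex_add_single hr, hp]
    ext i
    rcases eq_or_ne i k with rfl | hi <;> simp [*]
  have hle : ((a - b : ℤ) : ℝ) / r ≤ 0 :=
    div_nonpos_of_nonpos_of_nonneg (Int.cast_nonpos.2 (sub_nonpos.2 hb.1)) r.cast_nonneg
  have hge : 0 ≤ ((c - b : ℤ) : ℝ) / r :=
    div_nonneg (Int.cast_nonneg (sub_nonneg.2 hb.2)) r.cast_nonneg
  simpa using (ordConnected_setOf_add_single_mem hC p k).out (ha (hshift a)) (hc (hshift c))
    ⟨hle, hge⟩

/-- The part of `K` in the column of the index cube `[0, r)^ι` that runs in direction `k` through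
`w`. -/
def gridColumn (r : ℕ) (k : ι) (K : Set (ι → ℤ)) (w : ι → ℤ) : Set (ι → ℤ) :=
  {z ∈ K | (∀ i, z i ∈ Ico (0 : ℤ) r) ∧ ∀ i ≠ k, z i = w i}

theorem exists_gridColumn_eq_pi_Ico {r : ℕ} {K : Set (ι → ℤ)}
    (hK : ∀ z, {j | update z k j ∈ K}.OrdConnected) {w : ι → ℤ} (hw : ∀ i, w i ∈ Ico (0 : ℤ) r) :
    ∃ A B : ι → ℤ, (∀ i, 0 ≤ A i ∧ A i ≤ B i ∧ B i ≤ r) ∧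
      gridColumn r k K w = univ.pi fun i ↦ Ico (A i) (B i) := by
  obtain ⟨α, β, hα, hαβ, hβ, hcol⟩ := exists_eq_Ico_of_ordConnected
    ((hK w).inter (ordConnected_Ico (a := (0 : ℤ)) (b := r))) r.cast_nonneg inter_subset_right
  refine ⟨update w k α, update (w + 1) k β, fun i ↦ ?_, ?_⟩
  · rcases eq_or_ne i k with rfl | hi
    · simp [hα, hαβ, hβ]
    · simpa [hi] using hw i
  · have hmem (z : ι → ℤ) (h : ∀ i ≠ k, z i = w i) :
        z k ∈ Ico α β ↔ z ∈ K ∧ z k ∈ Ico (0 : ℤ) r := by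
      have hz : update w k (z k) = z := update_eq_iff.2 ⟨rfl, fun i hi ↦ (h i hi).symm⟩
      rw [← hcol, mem_inter_iff, mem_ofPred_eq, hz]
    ext z
    simp only [gridColumn, mem_ofPred_eq, mem_univ_pi]
    constructor
    · rintro ⟨hzK, hzr, hzw⟩ i
      rcases eq_or_ne i k with rfl | hi
      · simpa using (hmem z hzw).2 ⟨hzK, hzr i⟩
      · simp [hi, hzw i hi]
    · intro hz
      have hzw (i : ι) (hi : i ≠ k) : z i = w i := by
        have := hz i
        simp only [update_of_ne hi, mem_Ico, Pi.add_apply, Pi.one_apply] at this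
        lia
      obtain ⟨hzK, hzr⟩ := (hmem z hzw).1 (by simpa using hz k)
      refine ⟨hzK, fun i ↦ ?_, hzw⟩
      rcases eq_or_ne i k with rfl | hi
      · exact hzr
      · exact hzw i hi ▸ hw i

end GridIndex

section TestSets

/-- The boxes that define the discrepancy `D_N`: half-open axis-parallel boxes in the unit cube. -/
def unitBoxes (ι : Type*) : Set (Set (ι → ℝ)) :=
  {B | ∃ a b : ι → ℝ, (∀ i, 0 ≤ a i ∧ a i ≤ b i ∧ b i ≤ 1) ∧ B = univ.pi fun i ↦ Ico (a i) (b i)}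

/-- The convex sets that define the isotropic discrepancy `J_N`. -/
def unitConvexSets (ι : Type*) : Set (Set (ι → ℝ)) := {C | Convex ℝ C ∧ C ⊆ Icc 0 1}

theorem unitBoxes_nonempty : (unitBoxes ι).Nonempty := ⟨_, 0, 0, by simp, rfl⟩

theorem measurableSet_of_mem_unitBoxes [Countable ι] {B : Set (ι → ℝ)} (hB : B ∈ unitBoxes ι) :
    MeasurableSet B := by
  obtain ⟨a, b, -, rfl⟩ := hB
  exact .univ_pi fun _ ↦ measurableSet_Ico

theorem unitBoxes_subset_unitConvexSets : unitBoxes ι ⊆ unitConvexSets ι := by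
  rintro _ ⟨a, b, hab, rfl⟩
  refine ⟨convex_pi fun i _ ↦ convex_Ico (a i) (b i), fun y hy ↦ ⟨fun i ↦ ?_, fun i ↦ ?_⟩⟩
  · exact (hab i).1.trans (hy i trivial).1
  · exact (hy i trivial).2.le.trans (hab i).2.2

end TestSets

variable [Fintype ι]

section CubeMeasure

theorem pi_le_of_fibre_le [DecidableEq ι] {X : ι → Type*} [∀ i, MeasurableSpace (X i)]
    (μ : ∀ i, Measure (X i)) [∀ i, IsProbabilityMeasure (μ i)] (k : ι) {S : Set (∀ i, X i)}
    (hS : MeasurableSet S) {c : ℝ≥0∞} (h : ∀ y, μ k {t | update y k t ∈ S} ≤ c) :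
    Measure.pi μ S ≤ c := by
  have hfibre : ∫⋯∫⁻_{k}, S.indicator 1 ∂μ ≤ ∫⋯∫⁻_{k}, (fun _ ↦ c) ∂μ := by
    intro y
    have hSy : MeasurableSet {t | update y k t ∈ S} := measurable_update y hS
    calc (∫⋯∫⁻_{k}, S.indicator 1 ∂μ) y
        = ∫⁻ t, {t | update y k t ∈ S}.indicator 1 t ∂μ k := congrFun (lmarginal_singleton _ k) y
      _ = μ k {t | update y k t ∈ S} := lintegral_indicator_one hSy
      _ ≤ c := h y
      _ = (∫⋯∫⁻_{k}, (fun _ ↦ c) ∂μ) y := by simp [lmarginal_singleton]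
  calc Measure.pi μ S = ∫⁻ y, S.indicator 1 y ∂Measure.pi μ := (lintegral_indicator_one hS).symm
    _ ≤ ∫⁻ _, c ∂Measure.pi μ :=
      lintegral_le_of_lmarginal_le {k} (measurable_one.indicator hS) measurable_const hfibre
    _ = c := by simp

instance isProbabilityMeasure_volume_restrict_Ico :
    IsProbabilityMeasure (volume.restrict (Ico (0 : ℝ) 1)) := ⟨by simp⟩

/-- The uniform probability measure on the half-open unit cube, in product form. -/
noncomputable abbrev cubeMeasure (ι : Type*) [Fintype ι] : Measure (ι → ℝ) :=
  Measure.pi fun _ ↦ volume.restrict (Ico 0 1)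

theorem cubeMeasure_eq_restrict :
    cubeMeasure ι = volume.restrict (univ.pi fun _ ↦ Ico 0 1) := by
  rw [cubeMeasure, ← Measure.restrict_pi_pi, volume_pi]

variable [DecidableEq ι] {C : Set (ι → ℝ)} {k : ι} {ε : ℝ}

theorem cubeMeasure_sep_add_single_notMem_le (hC : Convex ℝ C) (hCm : MeasurableSet C) (k : ι)
    (a : ℝ) :
    (cubeMeasure ι).real {y ∈ C | y + Pi.single k a ∉ C} ≤ |a| := by
  refine ENNReal.toReal_le_of_le_ofReal (abs_nonneg a) (pi_le_of_fibre_le _ k ?_ fun y ↦ ?_)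
  · exact hCm.inter ((measurable_add_const _) hCm.compl)
  · refine (Measure.restrict_apply_le _ _).trans ?_
    simpa only [mem_ofPred_eq, Pi.update_eq_sub_add_single, Pi.single_add, add_assoc] using
      volume_sep_add_notMem_le (ordConnected_setOf_add_single_mem hC _ k) a

theorem cubeMeasure_le_axisErosion (hC : Convex ℝ C) (hCm : MeasurableSet C) (hε : 0 ≤ ε) :
    (cubeMeasure ι).real C ≤ (cubeMeasure ι).real (axisErosion k ε C) + 2 * ε := by
  let layer (a : ℝ) : Set (ι → ℝ) := {y ∈ C | y + Pi.single k a ∉ C}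
  have hcover : C ⊆ axisErosion k ε C ∪ (layer ε ∪ layer (-ε)) := by
    intro y hy
    by_cases h : y + Pi.single k ε ∈ C <;> by_cases h' : y + Pi.single k (-ε) ∈ C <;>
      simp [axisErosion, layer, h, h', hy]
  have hplus := cubeMeasure_sep_add_single_notMem_le hC hCm k ε
  have hminus := cubeMeasure_sep_add_single_notMem_le hC hCm k (-ε)
  rw [abs_neg] at hminus
  calc (cubeMeasure ι).real C
      ≤ (cubeMeasure ι).real (axisErosion k ε C ∪ (layer ε ∪ layer (-ε))) := measureReal_mono hcover
    _ ≤ (cubeMeasure ι).real (axisErosion k ε C) +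
          ((cubeMeasure ι).real (layer ε) + (cubeMeasure ι).real (layer (-ε))) := by
      grw [measureReal_union_le, measureReal_union_le]
    _ ≤ (cubeMeasure ι).real (axisErosion k ε C) + (|ε| + |ε|) := by gcongr
    _ = (cubeMeasure ι).real (axisErosion k ε C) + 2 * ε := by rw [abs_of_nonneg hε, two_mul]

theorem cubeMeasure_add_axisSegment_le (hC : Convex ℝ C) (hCc : IsCompact C) (hε : 0 ≤ ε) :
    (cubeMeasure ι).real (C + axisSegment k ε) ≤ (cubeMeasure ι).real C + 2 * ε := by
  grw [cubeMeasure_le_axisErosion (k := k) (hC.add convex_axisSegment)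
    (hCc.add isCompact_axisSegment).measurableSet hε,
    measureReal_mono (axisErosion_add_axisSegment_subset hC)]

theorem cubeMeasure_add_sum_axisSegment_le (hC : Convex ℝ C) (hCc : IsCompact C) (hε : 0 ≤ ε)
    (s : Finset ι) :
    (cubeMeasure ι).real (C + ∑ i ∈ s, axisSegment i ε) ≤
      (cubeMeasure ι).real C + s.card * (2 * ε) := by
  induction s using Finset.induction_on generalizing C with
  | empty => simp
  | insert k s hk ih =>
    rw [Finset.sum_insert hk, ← add_assoc, Finset.card_insert_of_notMem hk]
    grw [ih (hC.add convex_axisSegment) (hCc.add isCompact_axisSegment),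
      cubeMeasure_add_axisSegment_le hC hCc hε]
    push_cast
    linarith

theorem cubeMeasure_le_setOf_add_sum_axisSegment_mem (hC : Convex ℝ C) (hCm : MeasurableSet C)
    (hε : 0 ≤ ε) (s : Finset ι) :
    (cubeMeasure ι).real C ≤
      (cubeMeasure ι).real {y | ∀ v ∈ ∑ i ∈ s, axisSegment i ε, y + v ∈ C} +
        s.card * (2 * ε) := by
  induction s using Finset.induction_on generalizing C with
  | empty => simp
  | insert k s hk ih =>
    have hsub : {y | ∀ v ∈ ∑ i ∈ s, axisSegment i ε, y + v ∈ axisErosion k ε C} ⊆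
        {y | ∀ v ∈ ∑ i ∈ insert k s, axisSegment i ε, y + v ∈ C} := by
      intro y hy v hv
      rw [Finset.sum_insert hk, add_comm] at hv
      obtain ⟨w, hw, u, hu, rfl⟩ := hv
      simpa only [add_assoc] using add_mem_of_mem_axisErosion hC (hy w hw) hu
    grw [cubeMeasure_le_axisErosion (k := k) hC hCm hε,
      ih (convex_axisErosion hC) (measurableSet_axisErosion hCm), measureReal_mono hsub,
      Finset.card_insert_of_notMem hk]
    push_cast
    linarith

end CubeMeasure

section Discrepancy

/-- The discrepancy of `μ` on a family `𝒞` of subsets of the unit cube: the supremum over `C ∈ 𝒞`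
of `|μ C - vol C|`. The members of `𝒞` need not be measurable; `μ.real` is then the outer
measure. -/
noncomputable def discrepancy (𝒞 : Set (Set (ι → ℝ))) (μ : Measure (ι → ℝ)) : ℝ :=
  sSup ((fun C ↦ |μ.real C - volume.real C|) '' 𝒞)

theorem cubeMeasure_real_eq_volume_real {C : Set (ι → ℝ)} (hC : C ⊆ Icc 0 1) :
    (cubeMeasure ι).real C = volume.real C := by
  have hcube : (univ.pi fun _ ↦ Ico 0 1 : Set (ι → ℝ)) =ᵐ[volume] Icc 0 1 :=
    Measure.univ_pi_Ico_ae_eq_Icc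
  rw [cubeMeasure_eq_restrict, Measure.restrict_congr_set hcube, measureReal_def,
    Measure.restrict_eq_self _ hC, measureReal_def]

variable {μ : Measure (ι → ℝ)} {C : Set (ι → ℝ)} {𝒞 𝒟 : Set (Set (ι → ℝ))}

theorem discrepancy_nonneg : 0 ≤ discrepancy 𝒞 μ :=
  Real.sSup_nonneg (forall_mem_image.2 fun _ _ ↦ abs_nonneg _)

theorem discrepancy_le {D : ℝ} (h𝒞 : 𝒞.Nonempty)
    (hD : ∀ C ∈ 𝒞, |μ.real C - volume.real C| ≤ D) :
    discrepancy 𝒞 μ ≤ D :=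
  csSup_le (h𝒞.image _) (forall_mem_image.2 hD)

variable [IsProbabilityMeasure μ]

theorem abs_measureReal_sub_volume_le_one (hC : C ∈ unitConvexSets ι) :
    |μ.real C - volume.real C| ≤ 1 := by
  rw [← cubeMeasure_real_eq_volume_real hC.2]
  exact abs_sub_le_of_nonneg_of_le measureReal_nonneg measureReal_le_one measureReal_nonneg
    measureReal_le_one

theorem bddAbove_image_abs_sub (h𝒞 : 𝒞 ⊆ unitConvexSets ι) :
    BddAbove ((fun C ↦ |μ.real C - volume.real C|) '' 𝒞) :=
  ⟨1, forall_mem_image.2 fun _ hC ↦ abs_measureReal_sub_volume_le_one (h𝒞 hC)⟩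

theorem abs_sub_le_discrepancy (h𝒞 : 𝒞 ⊆ unitConvexSets ι) (hC : C ∈ 𝒞) :
    |μ.real C - volume.real C| ≤ discrepancy 𝒞 μ :=
  le_csSup (bddAbove_image_abs_sub h𝒞) (mem_image_of_mem _ hC)

theorem discrepancy_mono (h : 𝒞 ⊆ 𝒟) (h𝒞 : 𝒞.Nonempty) (h𝒟 : 𝒟 ⊆ unitConvexSets ι) :
    discrepancy 𝒞 μ ≤ discrepancy 𝒟 μ :=
  csSup_le_csSup (bddAbove_image_abs_sub h𝒟) (h𝒞.image _) (image_mono h)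

end Discrepancy

section ColumnDecomposition

variable [DecidableEq ι] {k : ι} {r : ℕ} {K : Set (ι → ℤ)}

/-- The base points of the columns in direction `k` of the index cube `[0, r)^ι`: one for each, on
the face where the `k`-th coordinate vanishes. -/
noncomputable def columnBases (r : ℕ) (k : ι) : Finset (ι → ℤ) :=
  Fintype.piFinset (update (fun _ ↦ Finset.Ico (0 : ℤ) r) k {0})

theorem mem_columnBases {w : ι → ℤ} :
    w ∈ columnBases r k ↔ w k = 0 ∧ ∀ i ≠ k, w i ∈ Ico (0 : ℤ) r := by
  simp only [columnBases, Fintype.mem_piFinset]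
  rw [forall_update_iff (p := fun i (s : Finset ℤ) ↦ w i ∈ s)]
  simp

theorem card_columnBases : (columnBases r k).card = r ^ (Fintype.card ι - 1) := by
  rw [columnBases, Fintype.card_piFinset, ← Finset.mul_prod_erase _ _ (Finset.mem_univ k)]
  rw [Finset.prod_congr rfl (g := fun _ ↦ r) fun i hi ↦ by simp [Finset.ne_of_mem_erase hi]]
  simp

theorem biUnion_gridColumn :
    ⋃ w ∈ columnBases r k, gridColumn r k K w = K ∩ univ.pi fun _ ↦ Ico (0 : ℤ) r := by
  ext z
  simp only [mem_iUnion, mem_inter_iff, mem_univ_pi, gridColumn, mem_ofPred_eq, exists_prop]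
  constructor
  · rintro ⟨w, -, hzK, hzr, -⟩
    exact ⟨hzK, hzr⟩
  · rintro ⟨hzK, hzr⟩
    refine ⟨update z k 0, mem_columnBases.2 ⟨update_self .., fun i hi ↦ ?_⟩, hzK, hzr,
      fun i hi ↦ (update_of_ne hi _ _).symm⟩
    simpa only [update_of_ne hi] using hzr i

theorem pairwiseDisjoint_gridColumn :
    (columnBases r k : Set (ι → ℤ)).PairwiseDisjoint (gridColumn r k K) := by
  refine fun w hw w' hw' hne ↦ disjoint_left.2 fun z hz hz' ↦ hne (funext fun i ↦ ?_)
  rcases eq_or_ne i k with rfl | hi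
  · rw [(mem_columnBases.1 hw).1, (mem_columnBases.1 hw').1]
  · rw [← hz.2.2 i hi, hz'.2.2 i hi]

theorem preimage_gridColumn_mem_unitBoxes (hr : 0 < r)
    (hK : ∀ z, {j | update z k j ∈ K}.OrdConnected) {w : ι → ℤ} (hw : w ∈ columnBases r k) :
    gridIndex r ⁻¹' gridColumn r k K w ∈ unitBoxes ι := by
  have hr' : (0 : ℝ) < r := Nat.cast_pos.2 hr
  obtain ⟨hwk, hwi⟩ := mem_columnBases.1 hw
  have hwcube (i : ι) : w i ∈ Ico (0 : ℤ) r := by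
    rcases eq_or_ne i k with rfl | hi
    · simp [hwk, hr]
    · exact hwi i hi
  obtain ⟨A, B, hAB, hcol⟩ := exists_gridColumn_eq_pi_Ico hK hwcube
  refine ⟨fun i ↦ A i / r, fun i ↦ B i / r, fun i ↦ ?_, ?_⟩
  · obtain ⟨h0A, hA, hB⟩ := hAB i
    exact ⟨div_nonneg (Int.cast_nonneg h0A) hr'.le,
      div_le_div_of_nonneg_right (Int.cast_le.2 hA) hr'.le, (div_le_one hr').2 (mod_cast hB)⟩
  · rw [hcol, preimage_gridIndex_pi_Ico hr]

theorem measureReal_preimage_eq_sum_gridColumn (hr : 0 < r)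
    (hK : ∀ z, {j | update z k j ∈ K}.OrdConnected) {μ : Measure (ι → ℝ)} [IsFiniteMeasure μ]
    (hμ : ∀ᵐ y ∂μ, y ∈ univ.pi fun _ ↦ Ico (0 : ℝ) 1) :
    μ.real (gridIndex r ⁻¹' K) =
      ∑ w ∈ columnBases r k, μ.real (gridIndex r ⁻¹' gridColumn r k K w) := by
  have hcube : (gridIndex r ⁻¹' univ.pi fun _ ↦ Ico (0 : ℤ) r) =
      univ.pi fun _ : ι ↦ Ico (0 : ℝ) 1 := by
    simpa [hr.ne'] using preimage_gridIndex_pi_Ico hr (fun _ : ι ↦ 0) (fun _ ↦ r)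
  have hmeas (w : ι → ℤ) (hw : w ∈ columnBases r k) :
      MeasurableSet (gridIndex r ⁻¹' gridColumn r k K w) :=
    measurableSet_of_mem_unitBoxes (preimage_gridColumn_mem_unitBoxes hr hK hw)
  rw [← measureReal_biUnion_finset
    (fun w hw w' hw' hne ↦ (pairwiseDisjoint_gridColumn hw hw' hne).preimage _) hmeas]
  rw [← preimage_iUnion₂, biUnion_gridColumn, preimage_inter, hcube]
  exact measureReal_congr (inter_ae_eq_left_of_ae_eq_univ (Filter.eventuallyEq_univ.2 hμ)).symm

theorem abs_measureReal_preimage_gridIndex_sub_le (hr : 0 < r)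
    (hK : ∀ z, {j | update z k j ∈ K}.OrdConnected) {μ ν : Measure (ι → ℝ)} [IsFiniteMeasure μ]
    [IsFiniteMeasure ν] (hμ : ∀ᵐ y ∂μ, y ∈ univ.pi fun _ ↦ Ico (0 : ℝ) 1)
    (hν : ∀ᵐ y ∂ν, y ∈ univ.pi fun _ ↦ Ico (0 : ℝ) 1) {D : ℝ}
    (hD : ∀ B ∈ unitBoxes ι, |μ.real B - ν.real B| ≤ D) :
    |μ.real (gridIndex r ⁻¹' K) - ν.real (gridIndex r ⁻¹' K)| ≤
      r ^ (Fintype.card ι - 1) * D := by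
  let col (w : ι → ℤ) : Set (ι → ℝ) := gridIndex r ⁻¹' gridColumn r k K w
  have hcol (w : ι → ℤ) (hw : w ∈ columnBases r k) : |μ.real (col w) - ν.real (col w)| ≤ D :=
    hD _ (preimage_gridColumn_mem_unitBoxes hr hK hw)
  rw [measureReal_preimage_eq_sum_gridColumn hr hK hμ,
    measureReal_preimage_eq_sum_gridColumn hr hK hν, ← Finset.sum_sub_distrib]
  calc |∑ w ∈ columnBases r k, (μ.real (col w) - ν.real (col w))|
      ≤ ∑ w ∈ columnBases r k, |μ.real (col w) - ν.real (col w)| := Finset.abs_sum_le_sum_abs _ _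
    _ ≤ (columnBases r k).card • D := Finset.sum_le_card_nsmul _ _ _ hcol
    _ = r ^ (Fintype.card ι - 1) * D := by rw [card_columnBases, nsmul_eq_mul, Nat.cast_pow]

end ColumnDecomposition

section ConvexBound

variable {C : Set (ι → ℝ)} {r : ℕ}

theorem preimage_image_gridIndex_subset [DecidableEq ι] (hr : 0 < r) :
    gridIndex r ⁻¹' (gridIndex r '' C) ⊆ C + ∑ i, axisSegment i (1 / r : ℝ) := by
  rintro p ⟨c, hc, hcp⟩
  exact ⟨c, hc, p - c, mem_sum_axisSegment (abs_sub_le_of_gridIndex_eq hr hcp.symm),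
    add_sub_cancel c p⟩

theorem setOf_add_sum_axisSegment_mem_subset [DecidableEq ι] (hr : 0 < r) :
    {y | ∀ v ∈ ∑ i, axisSegment i (1 / r : ℝ), y + v ∈ C} ⊆
      gridIndex r ⁻¹' kernImage (gridIndex r) C := by
  intro y hy p hp
  simpa using hy (p - y) (mem_sum_axisSegment (abs_sub_le_of_gridIndex_eq hr hp))

theorem cubeMeasure_frontier (hC : Convex ℝ C) : cubeMeasure ι (frontier C) = 0 := by
  rw [cubeMeasure_eq_restrict]
  exact Measure.absolutelyContinuous_of_le Measure.restrict_le_self (hC.addHaar_frontier volume)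

theorem cubeMeasure_preimage_image_gridIndex_le (hC : Convex ℝ C) (hCb : Bornology.IsBounded C)
    (hr : 0 < r) :
    (cubeMeasure ι).real (gridIndex r ⁻¹' (gridIndex r '' C)) ≤
      (cubeMeasure ι).real C + Fintype.card ι * (2 * (1 / r)) := by
  classical
  calc (cubeMeasure ι).real (gridIndex r ⁻¹' (gridIndex r '' C))
      ≤ (cubeMeasure ι).real (closure C + ∑ i, axisSegment i (1 / r : ℝ)) :=
        measureReal_mono <| (preimage_image_gridIndex_subset hr).trans
          (add_subset_add_right subset_closure)
    _ ≤ (cubeMeasure ι).real (closure C) + Fintype.card ι * (2 * (1 / r)) :=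
        cubeMeasure_add_sum_axisSegment_le hC.closure hCb.isCompact_closure (by positivity) _
    _ = (cubeMeasure ι).real C + Fintype.card ι * (2 * (1 / r)) := by
        rw [measureReal_congr (closure_ae_eq_of_null_frontier (cubeMeasure_frontier hC))]

theorem cubeMeasure_le_preimage_kernImage_gridIndex (hC : Convex ℝ C) (hr : 0 < r) :
    (cubeMeasure ι).real C ≤
      (cubeMeasure ι).real (gridIndex r ⁻¹' kernImage (gridIndex r) C) +
        Fintype.card ι * (2 * (1 / r)) := by
  classical
  calc (cubeMeasure ι).real C
      = (cubeMeasure ι).real (interior C) :=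
        (measureReal_congr (interior_ae_eq_of_null_frontier (cubeMeasure_frontier hC))).symm
    _ ≤ (cubeMeasure ι).real {y | ∀ v ∈ ∑ i, axisSegment i (1 / r : ℝ), y + v ∈ interior C} +
          Fintype.card ι * (2 * (1 / r)) :=
        cubeMeasure_le_setOf_add_sum_axisSegment_mem hC.interior measurableSet_interior
          (by positivity) _
    _ ≤ (cubeMeasure ι).real (gridIndex r ⁻¹' kernImage (gridIndex r) C) +
          Fintype.card ι * (2 * (1 / r)) := by
        gcongr
        · exact measure_ne_top _ _
        · exact (setOf_add_sum_axisSegment_mem_subset hr).trans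
            (preimage_mono (kernImage_mono interior_subset))

theorem abs_measureReal_sub_cubeMeasure_le [Nonempty ι] (hC : Convex ℝ C)
    (hCb : Bornology.IsBounded C) (hr : 0 < r) {μ : Measure (ι → ℝ)} [IsFiniteMeasure μ]
    (hμ : ∀ᵐ y ∂μ, y ∈ univ.pi fun _ ↦ Ico (0 : ℝ) 1) {D : ℝ}
    (hD : ∀ B ∈ unitBoxes ι, |μ.real B - (cubeMeasure ι).real B| ≤ D) :
    |μ.real C - (cubeMeasure ι).real C| ≤
      2 * Fintype.card ι / r + r ^ (Fintype.card ι - 1) * D := by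
  classical
  obtain ⟨k⟩ := ‹Nonempty ι›
  have hν : ∀ᵐ y ∂cubeMeasure ι, y ∈ univ.pi fun _ ↦ Ico (0 : ℝ) 1 := by
    rw [cubeMeasure_eq_restrict]
    exact ae_restrict_mem (.univ_pi fun _ ↦ measurableSet_Ico)
  have houter := abs_le.1 <| abs_measureReal_preimage_gridIndex_sub_le (k := k) hr
    (ordConnected_fibre_image_gridIndex hC r) hμ hν hD
  have hinner := abs_le.1 <| abs_measureReal_preimage_gridIndex_sub_le (k := k) hr
    (ordConnected_fibre_kernImage_gridIndex hC hr) hμ hν hD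
  have hle : μ.real C ≤ μ.real (gridIndex r ⁻¹' (gridIndex r '' C)) :=
    measureReal_mono (subset_preimage_image _ _)
  have hge : μ.real (gridIndex r ⁻¹' kernImage (gridIndex r) C) ≤ μ.real C :=
    measureReal_mono (Set.preimage_kernImage.l_u_le C)
  have hthick := cubeMeasure_preimage_image_gridIndex_le hC hCb hr
  have hthin := cubeMeasure_le_preimage_kernImage_gridIndex hC hr
  have hmesh : Fintype.card ι * (2 * (1 / r : ℝ)) = 2 * Fintype.card ι / r := by ring
  exact abs_le.2 ⟨by linarith, by linarith⟩

end ConvexBound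

section Optimization

variable {d : ℕ} {a e D : ℝ}

theorem nonpos_of_forall_le_div (h : ∀ r : ℕ, 0 < r → e ≤ a / r) : e ≤ 0 := by
  have hlim : Filter.Tendsto (fun r : ℕ ↦ a / r) Filter.atTop (nhds 0) :=
    tendsto_const_div_atTop_nhds_zero_nat a
  exact ge_of_tendsto hlim ((Filter.eventually_gt_atTop 0).mono h)

-- The two terms of the bound balance when `1 / r ≈ s`.
theorem le_mul_of_forall_le_div_add_pow_mul (ha : 0 ≤ a) {s : ℝ} (hs : 0 < s) (hs1 : s ≤ 1)
    (h : ∀ r : ℕ, 0 < r → e ≤ a / r + r ^ d * s ^ (d + 1)) : e ≤ (2 * a + 1) * s := by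
  let r := ⌊1 / s⌋₊
  have hr : 0 < r := Nat.floor_pos.2 ((one_le_div hs).2 hs1)
  have hr1 : (1 : ℝ) ≤ r := Nat.one_le_cast.2 hr
  have hrs : r * s ≤ 1 := (le_div_iff₀ hs).1 (Nat.floor_le (by positivity))
  have hmesh : 1 / (r : ℝ) ≤ 2 * s := by
    have hlt : 1 < (r + 1) * s := (div_lt_iff₀ hs).1 (Nat.lt_floor_add_one (1 / s))
    rw [div_le_iff₀ (by positivity)]
    nlinarith
  calc e ≤ a / r + r ^ d * s ^ (d + 1) := h r hr
    _ = a * (1 / r) + (r * s) ^ d * s := by ring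
    _ ≤ a * (2 * s) + 1 * s := by
      gcongr
      exact pow_le_one₀ (by positivity) hrs
    _ = (2 * a + 1) * s := by ring

theorem le_mul_rpow_of_forall_le_div_add (hd : d ≠ 0) (ha : 0 ≤ a) (hD : 0 ≤ D) (hD1 : D ≤ 1)
    (h : ∀ r : ℕ, 0 < r → e ≤ a / r + r ^ (d - 1) * D) :
    e ≤ (2 * a + 1) * D ^ ((1 : ℝ) / d) := by
  rcases hD.eq_or_lt with rfl | hD0
  · rw [Real.zero_rpow (by positivity), mul_zero]
    exact nonpos_of_forall_le_div fun r hr ↦ by simpa using h r hr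
  · have hpow : (D ^ ((1 : ℝ) / d)) ^ (d - 1 + 1) = D := by
      rw [Nat.sub_one_add_one hd, one_div, Real.rpow_inv_natCast_pow hD hd]
    exact le_mul_of_forall_le_div_add_pow_mul ha (Real.rpow_pos_of_pos hD0 _)
      (Real.rpow_le_one hD hD1 (by positivity)) fun r hr ↦ (h r hr).trans_eq (by rw [hpow])

end Optimization

theorem box_le_isotropic_le_general [Nonempty ι] (μ : Measure (ι → ℝ)) [IsProbabilityMeasure μ]
    (hμ : ∀ᵐ y ∂μ, y ∈ univ.pi fun _ ↦ Ico (0 : ℝ) 1) :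
    discrepancy (unitBoxes ι) μ ≤ discrepancy (unitConvexSets ι) μ ∧
      discrepancy (unitConvexSets ι) μ ≤
        (4 * Fintype.card ι + 1) * discrepancy (unitBoxes ι) μ ^ ((1 : ℝ) / Fintype.card ι) := by
  have hsub : unitBoxes ι ⊆ unitConvexSets ι := unitBoxes_subset_unitConvexSets
  refine ⟨discrepancy_mono hsub unitBoxes_nonempty Subset.rfl,
    discrepancy_le (unitBoxes_nonempty.mono hsub) fun C hC ↦ ?_⟩
  have hgrid (r : ℕ) (hr : 0 < r) : |μ.real C - volume.real C| ≤
      2 * Fintype.card ι / r + r ^ (Fintype.card ι - 1) * discrepancy (unitBoxes ι) μ := by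
    rw [← cubeMeasure_real_eq_volume_real hC.2]
    refine abs_measureReal_sub_cubeMeasure_le hC.1 ((Metric.isBounded_Icc 0 1).subset hC.2) hr hμ
      fun B hB ↦ ?_
    rw [cubeMeasure_real_eq_volume_real (hsub hB).2]
    exact abs_sub_le_discrepancy hsub hB
  have hbox1 : discrepancy (unitBoxes ι) μ ≤ 1 :=
    discrepancy_le unitBoxes_nonempty fun B hB ↦ abs_measureReal_sub_volume_le_one (hsub hB)
  convert le_mul_rpow_of_forall_le_div_add Fintype.card_ne_zero (by positivity)
    discrepancy_nonneg hbox1 hgrid using 2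
  ring

section Empirical

variable {α : Type*} [MeasurableSpace α] {N : ℕ}

/-- The uniform distribution on a finite sequence, with multiplicity. -/
noncomputable def empiricalMeasure (x : Fin N → α) : Measure α :=
  (N : ℝ≥0∞)⁻¹ • ∑ n, Measure.dirac (x n)

theorem isProbabilityMeasure_empiricalMeasure (hN : N ≠ 0) (x : Fin N → α) :
    IsProbabilityMeasure (empiricalMeasure x) := by
  constructor
  simp [empiricalMeasure, ENNReal.inv_mul_cancel, hN]

theorem ae_empiricalMeasure [MeasurableSingletonClass α] {x : Fin N → α} {p : α → Prop}
    (h : ∀ n, p (x n)) : ∀ᵐ y ∂empiricalMeasure x, p y := by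
  refine Measure.ae_smul_measure ?_ _
  rw [ae_iff, Measure.finsetSum_apply]
  simp [h]

theorem empiricalMeasure_real [MeasurableSingletonClass α] (x : Fin N → α) (S : Set α) :
    (empiricalMeasure x).real S = (∑ n, S.indicator (fun _ ↦ (1 : ℝ)) (x n)) / N := by
  have hdirac (n : Fin N) :
      (Measure.dirac (x n) S).toReal = S.indicator (fun _ ↦ (1 : ℝ)) (x n) := by
    by_cases h : x n ∈ S <;> simp [h]
  rw [empiricalMeasure, measureReal_ennreal_smul_apply, measureReal_def, Measure.finsetSum_apply,
    ENNReal.toReal_sum fun n _ ↦ measure_ne_top _ _]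
  simp only [hdirac, ENNReal.toReal_inv, ENNReal.toReal_natCast, div_eq_inv_mul]

end Empirical

theorem boxDiscrepancy_eq_discrepancy (d N : ℕ) (x : Fin N → Fin d → ℝ) :
    boxDiscrepancy d N x = discrepancy (unitBoxes (Fin d)) (empiricalMeasure x) := by
  have hvalue (a b : Fin d → ℝ) (hab : ∀ i, 0 ≤ a i ∧ a i ≤ b i ∧ b i ≤ 1) :
      |(∑ n, {y : Fin d → ℝ | ∀ i, a i ≤ y i ∧ y i < b i}.indicator (fun _ ↦ (1 : ℝ)) (x n)) / N -
          ∏ i, (b i - a i)| =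
        |(empiricalMeasure x).real (univ.pi fun i ↦ Ico (a i) (b i)) -
          volume.real (univ.pi fun i ↦ Ico (a i) (b i))| := by
    have hbox : (univ.pi fun i ↦ Ico (a i) (b i)) = {y | ∀ i, a i ≤ y i ∧ y i < b i} :=
      ext fun _ ↦ mem_univ_pi
    rw [measureReal_def volume, Real.volume_pi_Ico_toReal fun i ↦ (hab i).2.1,
      empiricalMeasure_real, hbox]
  rw [boxDiscrepancy, discrepancy]
  congr 1
  ext t
  constructor
  · rintro ⟨a, b, hab, rfl⟩
    exact ⟨_, ⟨a, b, hab, rfl⟩, (hvalue a b hab).symm⟩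
  · rintro ⟨_, ⟨a, b, hab, rfl⟩, rfl⟩
    exact ⟨a, b, hab, (hvalue a b hab).symm⟩

theorem isotropicDiscrepancy_eq_discrepancy (d N : ℕ) (x : Fin N → Fin d → ℝ) :
    isotropicDiscrepancy d N x = discrepancy (unitConvexSets (Fin d)) (empiricalMeasure x) := by
  have hIcc : {y : Fin d → ℝ | ∀ i, 0 ≤ y i ∧ y i ≤ 1} = Icc 0 1 := by
    ext; simp [Pi.le_def, forall_and]
  rw [isotropicDiscrepancy, discrepancy]
  congr 1
  ext t
  simp only [hIcc, ← empiricalMeasure_real, unitConvexSets, mem_image, mem_ofPred_eq, and_assoc,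
    eq_comm (a := t), measureReal_def]

/-- For any sequence `x 1, ..., x N` in `𝕋^d`, the isotropic discrepancy `J_N` and the
box discrepancy `D_N` satisfy `D_N ≤ J_N ≤ (4 d √d + 1) D_N^{1/d}`. -/
theorem box_le_isotropic_le (d N : ℕ) (hd : 1 ≤ d) (hN : 1 ≤ N)
    (x : Fin N → (Fin d → ℝ)) (hx : ∀ n i, 0 ≤ x n i ∧ x n i < 1) :
    boxDiscrepancy d N x ≤ isotropicDiscrepancy d N x ∧
      isotropicDiscrepancy d N x ≤
        (4 * d * Real.sqrt d + 1) * (boxDiscrepancy d N x) ^ ((1 : ℝ) / d) := by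
  have : Nonempty (Fin d) := ⟨⟨0, hd⟩⟩
  have := isProbabilityMeasure_empiricalMeasure (Nat.one_le_iff_ne_zero.1 hN) x
  rw [boxDiscrepancy_eq_discrepancy, isotropicDiscrepancy_eq_discrepancy]
  obtain ⟨hbox, hiso⟩ := box_le_isotropic_le_general (empiricalMeasure x)
    (ae_empiricalMeasure fun n i _ ↦ hx n i)
  rw [Fintype.card_fin] at hiso
  have hd' : (4 * d + 1 : ℝ) ≤ 4 * d * √d + 1 := by
    grw [← le_mul_of_one_le_right (by positivity) (Real.one_le_sqrt.2 (Nat.one_le_cast.2 hd))]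
  exact ⟨hbox, hiso.trans (mul_le_mul_of_nonneg_right hd' (Real.rpow_nonneg discrepancy_nonneg _))⟩
end

section
/- Irrational rotation on 𝕋^d by a Diophantine vector has polynomially small discrepancy: if α ∈ DC(c,τ) for some c > 0, τ > 1, then there exists δ > 0 such that D_N({θ + nα}_{n=0}^{N−1}) ≤ N^{−δ} for all sufficiently large N, uniformly in θ ∈ 𝕋^d. One may take any δ < 1/(d(τ−1)+1). -/
/-- distance from a real number to the nearest integer -/
noncomputable def distZ (x : ℝ) : ℝ := |x - round x|

/-!
Trap the indicator of every side of the box between two smooth arcs with transition length `ε`;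
this costs `O(ε)` in volume. The Fourier coefficients of a product of such arcs are
`O(ε ^ (-dσ) r(h) ^ (-(1 + σ)))` for each `σ ≥ 0`, uniformly in the arcs, so summing the geometric
series frequency by frequency bounds the error of its Birkhoff sums by `ε ^ (-dσ)` times
`∑ r(h) ^ (-(1 + σ)) / ‖⟨h, α⟩‖`.

This small-divisor series converges as soon as `1 + σ > τ`. In the dyadic block of frequencies with
`|hⱼ| ≈ 2 ^ sⱼ`, the Diophantine condition applied to differences of frequencies separates the
points `⟨h, α⟩` by a multiple of `2 ^ (-τ ∑ sⱼ)`, so for every `p > 1` the sum of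
`‖⟨h, α⟩‖ ^ (-p)` over the block is `O(2 ^ (τ p ∑ sⱼ))`, and the blocks can be summed if
`τ p < 1 + σ`.

Balancing `N ε` against `ε ^ (-dσ)` gives the discrepancy bound `O(N ^ (-1 / (dσ + 1)))`, and `σ`
may be taken arbitrarily close to `τ - 1`.
-/

section Summation

variable {ι κ : Type*}

lemma summable_prod_apply [Fintype ι] {f : κ → ℝ} (hf : Summable f) (hf0 : ∀ k, 0 ≤ f k) :
    Summable fun s : ι → κ => ∏ j, f (s j) := by
  classical
  refine summable_of_sum_le (c := ∏ _j : ι, ∑' k, f k)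
    (fun s => Finset.prod_nonneg fun j _ => hf0 (s j)) fun T => ?_
  let projections : ι → Finset κ := fun j => T.image fun s => s j
  calc ∑ s ∈ T, ∏ j, f (s j)
      ≤ ∑ s ∈ Fintype.piFinset projections, ∏ j, f (s j) :=
        Finset.sum_le_sum_of_subset_of_nonneg
          (fun s hs => Fintype.mem_piFinset.mpr fun j => Finset.mem_image_of_mem _ hs)
          fun s _ _ => Finset.prod_nonneg fun j _ => hf0 (s j)
    _ = ∏ j, ∑ k ∈ projections j, f k := (Finset.prod_univ_sum projections fun _ => f).symm
    _ ≤ ∏ _j : ι, ∑' k, f k :=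
        Finset.prod_le_prod (fun j _ => Finset.sum_nonneg fun k _ => hf0 k)
          fun j _ => hf.sum_le_tsum _ fun k _ => hf0 k

lemma sum_rpow_neg_le_of_one_separated {p : ℝ} (hp : 1 < p) (A : Finset ι) (y : ι → ℝ)
    (h_one : ∀ i ∈ A, 1 ≤ |y i|) (h_sep : ∀ i ∈ A, ∀ j ∈ A, i ≠ j → 1 ≤ |y i - y j|) :
    ∑ i ∈ A, |y i| ^ (-p) ≤ 2 ^ p * ∑' n : ℤ, |(n : ℝ)| ^ (-p) := by
  classical
  have h_inj : Set.InjOn (fun i => ⌊y i⌋) A := by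
    intro i hi j hj hij
    by_contra hne
    exact (h_sep i hi j hj hne).not_gt (Int.abs_sub_lt_one_of_floor_eq_floor hij)
  have h_floor : ∀ i ∈ A, 0 < |(⌊y i⌋ : ℝ)| ∧ |(⌊y i⌋ : ℝ)| ≤ 2 * |y i| := by
    intro i hi
    have h1 := h_one i hi
    refine ⟨abs_pos.mpr (Int.cast_ne_zero.mpr fun h0 => ?_), ?_⟩
    · obtain ⟨hy0, hy1⟩ := Int.floor_eq_zero_iff.mp h0
      rw [abs_of_nonneg hy0] at h1
      exact h1.not_gt hy1
    · have hfract : |(⌊y i⌋ : ℝ) - y i| ≤ 1 := by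
        rw [abs_sub_comm, Int.self_sub_floor, abs_of_nonneg (Int.fract_nonneg _)]
        exact (Int.fract_lt_one _).le
      linarith [abs_sub_abs_le_abs_sub (⌊y i⌋ : ℝ) (y i)]
  calc ∑ i ∈ A, |y i| ^ (-p)
      ≤ ∑ i ∈ A, 2 ^ p * |(⌊y i⌋ : ℝ)| ^ (-p) := by
        refine Finset.sum_le_sum fun i hi => ?_
        have hfi := h_floor i hi
        calc |y i| ^ (-p) = 2 ^ p * (2 * |y i|) ^ (-p) := by
              rw [Real.mul_rpow two_pos.le (abs_nonneg _), ← mul_assoc,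
                ← Real.rpow_add two_pos, add_neg_cancel, Real.rpow_zero, one_mul]
          _ ≤ _ := mul_le_mul_of_nonneg_left
              (Real.rpow_le_rpow_of_nonpos hfi.1 hfi.2 (by linarith)) (by positivity)
    _ = 2 ^ p * ∑ n ∈ A.image fun i => ⌊y i⌋, |(n : ℝ)| ^ (-p) := by
        rw [Finset.sum_image h_inj, Finset.mul_sum]
    _ ≤ 2 ^ p * ∑' n : ℤ, |(n : ℝ)| ^ (-p) :=
        mul_le_mul_of_nonneg_left ((Real.summable_abs_int_rpow hp).sum_le_tsum _
          fun n _ => by positivity) (by positivity)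

lemma norm_le_half (x : UnitAddCircle) : ‖x‖ ≤ 1 / 2 := by
  simpa only [abs_one] using AddCircle.norm_le_half_period 1 one_ne_zero

lemma exists_coe_eq_and_abs_eq_norm (x : UnitAddCircle) :
    ∃ y : ℝ, (y : UnitAddCircle) = x ∧ |y| = ‖x‖ := by
  obtain ⟨y, rfl⟩ := QuotientAddGroup.mk_surjective x
  exact ⟨y - round y, by simp, UnitAddCircle.norm_eq.symm⟩

lemma sum_norm_rpow_neg_le_of_separated {p η : ℝ} (hp : 1 < p) (hη : 0 < η) (A : Finset ι)
    (x : ι → UnitAddCircle) (h_zero : ∀ i ∈ A, η ≤ ‖x i‖)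
    (h_sep : ∀ i ∈ A, ∀ j ∈ A, i ≠ j → η ≤ ‖x i - x j‖) :
    ∑ i ∈ A, ‖x i‖ ^ (-p) ≤ 2 ^ p * (∑' n : ℤ, |(n : ℝ)| ^ (-p)) * η ^ (-p) := by
  choose y hy_coe hy_abs using fun i => exists_coe_eq_and_abs_eq_norm (x i)
  have h_scaled : ∑ i ∈ A, |y i / η| ^ (-p) ≤ 2 ^ p * ∑' n : ℤ, |(n : ℝ)| ^ (-p) := by
    refine sum_rpow_neg_le_of_one_separated hp A _ (fun i hi => ?_) fun i hi j hj hij => ?_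
    · rw [abs_div, abs_of_pos hη, one_le_div hη, hy_abs]
      exact h_zero i hi
    · rw [← sub_div, abs_div, abs_of_pos hη, one_le_div hη]
      refine (h_sep i hi j hj hij).trans ?_
      rw [← hy_coe i, ← hy_coe j, ← AddCircle.coe_sub]
      exact QuotientAddGroup.norm_mk_le_norm
  calc ∑ i ∈ A, ‖x i‖ ^ (-p) = (∑ i ∈ A, |y i / η| ^ (-p)) * η ^ (-p) := by
        rw [Finset.sum_mul]
        refine Finset.sum_congr rfl fun i _ => ?_
        rw [← Real.mul_rpow (abs_nonneg _) hη.le, abs_div, abs_of_pos hη,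
          div_mul_cancel₀ _ hη.ne', hy_abs]
    _ ≤ _ := mul_le_mul_of_nonneg_right h_scaled (by positivity)

end Summation

section Diophantine

variable {ι : Type*}

/-- The dyadic level of a frequency: `2 ^ dyadicLevel h j` is the largest power of two not
exceeding `max(|hⱼ|, 1)`. -/
def dyadicLevel (h : ι → ℤ) (j : ι) : ℕ := Nat.log 2 (h j).natAbs

lemma two_pow_dyadicLevel_le (h : ι → ℤ) (j : ι) :
    (2 : ℝ) ^ dyadicLevel h j ≤ max |(h j : ℝ)| 1 := by
  rcases eq_or_ne (h j) 0 with h0 | h0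
  · simp [dyadicLevel, h0]
  · refine le_max_of_le_left ?_
    rw [← Int.cast_abs, ← Nat.cast_natAbs]
    exact_mod_cast Nat.pow_log_le_self 2 (Int.natAbs_ne_zero.mpr h0)

lemma abs_le_two_mul_two_pow_dyadicLevel (h : ι → ℤ) (j : ι) :
    |(h j : ℝ)| ≤ 2 * 2 ^ dyadicLevel h j := by
  rw [← Int.cast_abs, ← Nat.cast_natAbs, ← pow_succ']
  exact_mod_cast (Nat.lt_pow_succ_log_self one_lt_two (h j).natAbs).le

variable [Fintype ι]

/-- The multiplicative height `r(h) = ∏ⱼ max(|hⱼ|, 1)` of a frequency `h`. -/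
noncomputable def multHeight (h : ι → ℤ) : ℝ := ∏ j, max |(h j : ℝ)| 1

/-- `IsDiophantine α c τ` is the Diophantine condition `α ∈ DC(c, τ)`. The resonance `⟨h, α⟩` is
an element of the circle, whose norm is the distance to the nearest integer. -/
def IsDiophantine (α : UnitAddTorus ι) (c τ : ℝ) : Prop :=
  ∀ h : ι → ℤ, h ≠ 0 → c / multHeight h ^ τ ≤ ‖Fintype.linearCombination ℤ α h‖

lemma multHeight_pos (h : ι → ℤ) : 0 < multHeight h :=
  Finset.prod_pos fun _ _ => lt_max_of_lt_right one_pos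

lemma two_pow_sum_dyadicLevel_le_multHeight (h : ι → ℤ) :
    (2 : ℝ) ^ ∑ j, dyadicLevel h j ≤ multHeight h := by
  rw [← Finset.prod_pow_eq_pow_sum]
  exact Finset.prod_le_prod (fun _ _ => by positivity) fun j _ => two_pow_dyadicLevel_le h j

lemma multHeight_le_of_abs_le {h : ι → ℤ} {s : ι → ℕ} (hs : ∀ j, |(h j : ℝ)| ≤ 4 * 2 ^ s j) :
    multHeight h ≤ 4 ^ Fintype.card ι * 2 ^ ∑ j, s j := by
  rw [← Finset.prod_pow_eq_pow_sum, ← Finset.card_univ, ← Finset.prod_const,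
    ← Finset.prod_mul_distrib]
  refine Finset.prod_le_prod (fun _ _ => by positivity) fun j _ => max_le (hs j) ?_
  linarith [one_le_pow₀ (one_le_two : (1 : ℝ) ≤ 2) (n := s j)]

lemma multHeight_rpow_div_norm_le {p ρ : ℝ} (hp : 1 ≤ p) (hρ : 0 ≤ ρ) (α : UnitAddTorus ι)
    (h : ι → ℤ) :
    multHeight h ^ (-ρ) / ‖Fintype.linearCombination ℤ α h‖ ≤
      (2 ^ ∑ j, dyadicLevel h j) ^ (-ρ) * ‖Fintype.linearCombination ℤ α h‖ ^ (-p) := by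
  rw [div_eq_mul_inv]
  refine mul_le_mul (Real.rpow_le_rpow_of_nonpos (by positivity)
    (two_pow_sum_dyadicLevel_le_multHeight h) (neg_nonpos.mpr hρ)) ?_
    (by positivity) (by positivity)
  rcases (norm_nonneg (Fintype.linearCombination ℤ α h)).eq_or_lt with h0 | h0
  · rw [← h0, inv_zero]
    positivity
  · rw [← Real.rpow_neg_one]
    refine Real.rpow_le_rpow_of_exponent_ge h0 ?_ (neg_le_neg hp)
    linarith [norm_le_half (Fintype.linearCombination ℤ α h)]

namespace IsDiophantine

variable {α : UnitAddTorus ι} {c τ : ℝ}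

lemma le_norm_of_abs_le (hα : IsDiophantine α c τ) (hc : 0 < c) (hτ : 0 < τ) {h : ι → ℤ}
    {s : ι → ℕ} (h_ne : h ≠ 0) (hs : ∀ j, |(h j : ℝ)| ≤ 4 * 2 ^ s j) :
    c / (4 ^ Fintype.card ι * 2 ^ ∑ j, s j) ^ τ ≤ ‖Fintype.linearCombination ℤ α h‖ := by
  have h_pos := multHeight_pos h
  have h_le := multHeight_le_of_abs_le hs
  exact le_trans (by gcongr) (hα h h_ne)

lemma resonance_ne_zero (hα : IsDiophantine α c τ) (hc : 0 < c) {h : ι → ℤ} (h_ne : h ≠ 0) :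
    Fintype.linearCombination ℤ α h ≠ 0 :=
  norm_pos_iff.mp <|
    (div_pos hc (Real.rpow_pos_of_pos (multHeight_pos h) τ)).trans_le (hα h h_ne)

lemma sum_dyadic_block_le (hα : IsDiophantine α c τ) (hc : 0 < c) (hτ : 0 < τ) {p : ℝ}
    (hp : 1 < p) : ∃ K : ℝ, 0 ≤ K ∧ ∀ (s : ι → ℕ) (A : Finset (ι → ℤ)),
      (∀ h ∈ A, dyadicLevel h = s) →
      ∑ h ∈ A, ‖Fintype.linearCombination ℤ α h‖ ^ (-p) ≤ K * (2 ^ ∑ j, s j) ^ (τ * p) := by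
  classical
  refine ⟨2 ^ p * (∑' n : ℤ, |(n : ℝ)| ^ (-p)) * (c / (4 ^ Fintype.card ι) ^ τ) ^ (-p),
    mul_nonneg (mul_nonneg (by positivity) (tsum_nonneg fun _ => by positivity))
      (by positivity), fun s A hA => ?_⟩
  have h_abs : ∀ h ∈ A, ∀ j, |(h j : ℝ)| ≤ 2 * 2 ^ s j := fun h hh j =>
    hA h hh ▸ abs_le_two_mul_two_pow_dyadicLevel h j
  set η : ℝ := c / (4 ^ Fintype.card ι * 2 ^ ∑ j, s j) ^ τ with hη_def
  have hη : 0 < η := by positivity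
  have h_zero : ‖Fintype.linearCombination ℤ α 0‖ ^ (-p) = 0 := by
    rw [map_zero, norm_zero, Real.zero_rpow (by linarith)]
  rw [← Finset.sum_erase A h_zero]
  calc ∑ h ∈ A.erase 0, ‖Fintype.linearCombination ℤ α h‖ ^ (-p)
      ≤ 2 ^ p * (∑' n : ℤ, |(n : ℝ)| ^ (-p)) * η ^ (-p) := by
        refine sum_norm_rpow_neg_le_of_separated hp hη _ _ (fun h hh => ?_)
          fun h hh h' hh' hne => ?_
        · obtain ⟨h_ne, hhA⟩ := Finset.mem_erase.mp hh
          refine hα.le_norm_of_abs_le hc hτ h_ne fun j => (h_abs h hhA j).trans ?_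
          gcongr
          norm_num
        · rw [← map_sub]
          refine hα.le_norm_of_abs_le hc hτ (sub_ne_zero.mpr hne) fun j => ?_
          have hj := h_abs h (Finset.mem_of_mem_erase hh) j
          have hj' := h_abs h' (Finset.mem_of_mem_erase hh') j
          rw [Pi.sub_apply, Int.cast_sub]
          linarith [abs_sub (h j : ℝ) (h' j)]
    _ = _ := by
        rw [mul_assoc, mul_assoc _ _ ((2 ^ ∑ j, s j) ^ (τ * p) : ℝ), hη_def,
          Real.mul_rpow (by positivity) (by positivity), ← div_div,
          Real.div_rpow (by positivity) (by positivity) (-p),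
          Real.rpow_neg (by positivity : (0 : ℝ) ≤ (2 ^ ∑ j, s j) ^ τ), div_inv_eq_mul,
          ← Real.rpow_mul (by positivity)]
        ring

lemma sum_dyadic_block_multHeight_rpow_div_norm_le (hα : IsDiophantine α c τ) (hc : 0 < c)
    (hτ : 0 < τ) {p ρ : ℝ} (hp : 1 < p) (hρ : 0 ≤ ρ) : ∃ K : ℝ, 0 ≤ K ∧
      ∀ (s : ι → ℕ) (A : Finset (ι → ℤ)), (∀ h ∈ A, dyadicLevel h = s) →
      ∑ h ∈ A, multHeight h ^ (-ρ) / ‖Fintype.linearCombination ℤ α h‖ ≤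
        K * ((2 : ℝ) ^ (τ * p - ρ)) ^ ∑ j, s j := by
  obtain ⟨K, hK, h_block⟩ := hα.sum_dyadic_block_le hc hτ hp
  refine ⟨K, hK, fun s A hA => ?_⟩
  calc ∑ h ∈ A, multHeight h ^ (-ρ) / ‖Fintype.linearCombination ℤ α h‖
      ≤ ∑ h ∈ A, (2 ^ ∑ j, s j) ^ (-ρ) * ‖Fintype.linearCombination ℤ α h‖ ^ (-p) :=
        Finset.sum_le_sum fun h hh => by
          simpa only [hA h hh] using multHeight_rpow_div_norm_le hp.le hρ α h
    _ ≤ (2 ^ ∑ j, s j) ^ (-ρ) * (K * (2 ^ ∑ j, s j) ^ (τ * p)) := by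
        rw [← Finset.mul_sum]
        exact mul_le_mul_of_nonneg_left (h_block s A hA) (by positivity)
    _ = K * ((2 : ℝ) ^ (τ * p - ρ)) ^ ∑ j, s j := by
        rw [mul_left_comm, ← Real.rpow_add (by positivity), ← Real.rpow_natCast,
          ← Real.rpow_natCast, ← Real.rpow_mul two_pos.le, ← Real.rpow_mul two_pos.le]
        ring_nf

theorem summable_multHeight_rpow_div_norm (hα : IsDiophantine α c τ) (hc : 0 < c) (hτ : 0 < τ)
    {ρ : ℝ} (hρ : τ < ρ) :
    Summable fun h : ι → ℤ => multHeight h ^ (-ρ) / ‖Fintype.linearCombination ℤ α h‖ := by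
  classical
  obtain ⟨p, hp, hpρ⟩ := exists_between ((one_lt_div hτ).mpr hρ)
  rw [lt_div_iff₀ hτ] at hpρ
  obtain ⟨K, hK, h_block⟩ :=
    hα.sum_dyadic_block_multHeight_rpow_div_norm_le hc hτ hp (hτ.trans hρ).le
  set q : ℝ := 2 ^ (τ * p - ρ)
  have hq : 0 < q := by positivity
  have hq_lt : q < 1 := Real.rpow_lt_one_of_one_lt_of_neg one_lt_two (by linarith)
  have h_levels : Summable fun s : ι → ℕ => q ^ ∑ j, s j := by
    simp only [← Finset.prod_pow_eq_pow_sum]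
    exact summable_prod_apply (summable_geometric_of_lt_one hq.le hq_lt) fun k => by positivity
  refine summable_of_sum_le (c := ∑' s : ι → ℕ, K * q ^ ∑ j, s j)
    (fun h => div_nonneg (Real.rpow_nonneg (multHeight_pos h).le _) (norm_nonneg _)) fun T => ?_
  rw [← Finset.sum_fiberwise_of_maps_to fun h => Finset.mem_image_of_mem dyadicLevel]
  exact (Finset.sum_le_sum fun s _ => h_block s _ fun h hh => (Finset.mem_filter.mp hh).2).trans
    ((h_levels.mul_left K).sum_le_tsum _ fun s _ => by positivity)

end IsDiophantine

end Diophantine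

section BirkhoffSums

open UnitAddTorus

lemma four_mul_norm_le_norm_toCircle_sub_one (t : UnitAddCircle) :
    4 * ‖t‖ ≤ ‖(AddCircle.toCircle t : ℂ) - 1‖ := by
  obtain ⟨y, rfl, hy⟩ := exists_coe_eq_and_abs_eq_norm t
  have h_half : |y| ≤ 1 / 2 := hy ▸ norm_le_half _
  have h_exp : (AddCircle.toCircle (y : UnitAddCircle) : ℂ) =
      Complex.exp (Complex.I * (2 * Real.pi * y : ℝ)) := by
    rw [AddCircle.toCircle_apply_mk, Circle.coe_exp, div_one, mul_comm]
  have h_sin : 2 / Real.pi * |Real.pi * y| ≤ |Real.sin (Real.pi * y)| := by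
    refine Real.mul_abs_le_abs_sin ?_
    rw [abs_mul, abs_of_pos Real.pi_pos]
    nlinarith [Real.pi_pos]
  rw [abs_mul, abs_of_pos Real.pi_pos, ← mul_assoc, div_mul_cancel₀ _ Real.pi_ne_zero] at h_sin
  rw [h_exp, Complex.norm_exp_I_mul_ofReal_sub_one, norm_mul, Real.norm_two, Real.norm_eq_abs,
    mul_assoc, mul_div_cancel_left₀ _ two_ne_zero, ← hy]
  linarith

variable {ι : Type*} [Fintype ι]

lemma mFourier_apply_eq_toCircle (h : ι → ℤ) (x : UnitAddTorus ι) :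
    mFourier h x = AddCircle.toCircle (Fintype.linearCombination ℤ x h) := by
  simp only [mFourier, ContinuousMap.coe_mk, fourier_apply, Fintype.linearCombination_apply]
  exact (map_prod (Circle.coeHom.comp AddCircle.toCircle_addChar.toMonoidHom)
    (fun j => Multiplicative.ofAdd (h j • x j)) Finset.univ).symm

lemma norm_sum_mFourier_orbit_le (N : ℕ) (θ α : UnitAddTorus ι) {h : ι → ℤ}
    (h_ne : Fintype.linearCombination ℤ α h ≠ 0) :
    ‖∑ n ∈ Finset.range N, mFourier h (θ + n • α)‖ ≤
      1 / 2 / ‖Fintype.linearCombination ℤ α h‖ := by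
  set z : ℂ := (AddCircle.toCircle (Fintype.linearCombination ℤ α h) : ℂ) with hz
  have h_orbit (n : ℕ) : mFourier h (θ + n • α) = mFourier h θ * z ^ n := by
    simp only [hz, mFourier_apply_eq_toCircle, ← Circle.coe_pow, ← AddCircle.toCircle_nsmul,
      ← Circle.coe_mul, ← AddCircle.toCircle_add, Fintype.linearCombination_apply, Pi.add_apply,
      Pi.smul_apply, smul_add, Finset.sum_add_distrib, Finset.smul_sum, smul_comm (h _) n]
  have h_norm : ‖mFourier h θ‖ = 1 := by
    rw [mFourier_apply_eq_toCircle, Circle.norm_coe]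
  have h_geom : ‖∑ n ∈ Finset.range N, z ^ n‖ * ‖z - 1‖ ≤ 2 := by
    rw [← norm_mul, geom_sum_mul]
    refine (norm_sub_le _ _).trans (le_of_eq ?_)
    rw [norm_pow, Circle.norm_coe, one_pow, norm_one, one_add_one_eq_two]
  have h_pos := norm_pos_iff.mpr h_ne
  simp only [h_orbit, ← Finset.mul_sum, norm_mul, h_norm, one_mul]
  rw [le_div_iff₀ h_pos]
  nlinarith [four_mul_norm_le_norm_toCircle_sub_one (Fintype.linearCombination ℤ α h),
    norm_nonneg (∑ n ∈ Finset.range N, z ^ n)]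

theorem norm_birkhoffSum_sub_le {α : UnitAddTorus ι}
    (hα : ∀ h : ι → ℤ, h ≠ 0 → Fintype.linearCombination ℤ α h ≠ 0) {F : C(UnitAddTorus ι, ℂ)}
    (hF : Summable (mFourierCoeff F))
    (hFα : Summable fun h => ‖mFourierCoeff F h‖ / ‖Fintype.linearCombination ℤ α h‖)
    (N : ℕ) (θ : UnitAddTorus ι) :
    ‖∑ n ∈ Finset.range N, F (θ + n • α) - N * mFourierCoeff F 0‖ ≤
      1 / 2 * ∑' h, ‖mFourierCoeff F h‖ / ‖Fintype.linearCombination ℤ α h‖ := by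
  classical
  have h_series : HasSum
      (fun h => mFourierCoeff F h * ∑ n ∈ Finset.range N, mFourier h (θ + n • α))
      (∑ n ∈ Finset.range N, F (θ + n • α)) := by
    simp only [Finset.mul_sum]
    exact hasSum_sum fun n _ => hasSum_mFourier_series_apply_of_summable hF (θ + n • α)
  have h_zero : mFourierCoeff F 0 * ∑ n ∈ Finset.range N, mFourier 0 (θ + n • α) =
      N * mFourierCoeff F 0 := by
    simp only [mFourier_zero, ContinuousMap.one_apply, Finset.sum_const, Finset.card_range,
      nsmul_eq_mul, mul_one, mul_comm]
  rw [← h_zero]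
  refine (hasSum_ite_sub_hasSum h_series 0).norm_le_of_bounded (hFα.hasSum.mul_left (1 / 2))
    fun h => ?_
  split_ifs with h0
  · rw [norm_zero]
    positivity
  · rw [norm_mul, mul_div_left_comm]
    exact mul_le_mul_of_nonneg_left (norm_sum_mFourier_orbit_le N θ α (hα h h0)) (norm_nonneg _)

end BirkhoffSums

section TensorProducts

open UnitAddTorus

variable {ι : Type*} [Fintype ι]

/-- The tensor product `x ↦ ∏ⱼ fⱼ(xⱼ)` of functions on the circle, as a function on the torus. -/
noncomputable def torusTensor (f : ι → C(UnitAddCircle, ℂ)) : C(UnitAddTorus ι, ℂ) where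
  toFun x := ∏ j, f j (x j)
  continuous_toFun := by fun_prop

lemma mFourierCoeff_torusTensor (f : ι → C(UnitAddCircle, ℂ)) (h : ι → ℤ) :
    mFourierCoeff (torusTensor f) h = ∏ j, fourierCoeff (f j) (h j) := by
  simp only [mFourierCoeff, torusTensor, mFourier, ContinuousMap.coe_mk, smul_eq_mul,
    ← Finset.prod_mul_distrib, Pi.neg_apply, fourierCoeff]
  exact MeasureTheory.integral_fintype_prod_eq_prod
    (μ := fun _ : ι => AddCircle.haarAddCircle (T := (1 : ℝ)))
    (fun j t => fourier (-h j) t * f j t)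

lemma norm_mFourierCoeff_torusTensor_le {f : ι → C(UnitAddCircle, ℂ)} {K ρ : ℝ}
    (hf : ∀ j n, ‖fourierCoeff (f j) n‖ ≤ K * max |(n : ℝ)| 1 ^ (-ρ)) (h : ι → ℤ) :
    ‖mFourierCoeff (torusTensor f) h‖ ≤ K ^ Fintype.card ι * multHeight h ^ (-ρ) := by
  rw [mFourierCoeff_torusTensor, norm_prod, multHeight,
    ← Real.finsetProd_rpow _ _ fun _ _ => by positivity, ← Finset.card_univ, ← Finset.prod_const,
    ← Finset.prod_mul_distrib]
  exact Finset.prod_le_prod (fun _ _ => norm_nonneg _) fun j _ => hf j (h j)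

/-- The small-divisor series of `α`. It governs the error in the ergodic theorem for functions
whose Fourier coefficients are `O(multHeight h ^ (-ρ))`. -/
noncomputable def smallDivisorSum (α : UnitAddTorus ι) (ρ : ℝ) : ℝ :=
  ∑' h : ι → ℤ, multHeight h ^ (-ρ) / ‖Fintype.linearCombination ℤ α h‖

lemma smallDivisorSum_nonneg (α : UnitAddTorus ι) (ρ : ℝ) : 0 ≤ smallDivisorSum α ρ :=
  tsum_nonneg fun h => div_nonneg (Real.rpow_nonneg (multHeight_pos h).le _) (norm_nonneg _)

theorem IsDiophantine.norm_birkhoffSum_torusTensor_sub_le {α : UnitAddTorus ι} {c τ ρ K : ℝ}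
    (hα : IsDiophantine α c τ) (hc : 0 < c) (hτ : 0 < τ) (hρ : τ < ρ)
    {f : ι → C(UnitAddCircle, ℂ)}
    (hf : ∀ j n, ‖fourierCoeff (f j) n‖ ≤ K * max |(n : ℝ)| 1 ^ (-ρ)) (N : ℕ)
    (θ : UnitAddTorus ι) :
    ‖∑ n ∈ Finset.range N, ∏ j, f j (θ j + n • α j) - N * ∏ j, fourierCoeff (f j) 0‖ ≤
      1 / 2 * K ^ Fintype.card ι * smallDivisorSum α ρ := by
  have h_coeff := norm_mFourierCoeff_torusTensor_le hf
  have h_div (h : ι → ℤ) :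
      ‖mFourierCoeff (torusTensor f) h‖ / ‖Fintype.linearCombination ℤ α h‖ ≤
        K ^ Fintype.card ι * (multHeight h ^ (-ρ) / ‖Fintype.linearCombination ℤ α h‖) := by
    rw [← mul_div_assoc]
    exact div_le_div_of_nonneg_right (h_coeff h) (norm_nonneg _)
  have h_major := (hα.summable_multHeight_rpow_div_norm hc hτ hρ).mul_left (K ^ Fintype.card ι)
  have h_summable_div := h_major.of_nonneg_of_le (fun h => by positivity) h_div
  have h_summable : Summable (mFourierCoeff (torusTensor f)) := by
    refine h_summable_div.of_norm_bounded_eventually ?_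
    filter_upwards [(Set.finite_singleton (0 : ι → ℤ)).compl_mem_cofinite] with h h_ne
    exact le_div_self (norm_nonneg _) (norm_pos_iff.mpr (hα.resonance_ne_zero hc h_ne))
      ((norm_le_half _).trans (by norm_num))
  calc _ ≤ 1 / 2 * ∑' h, ‖mFourierCoeff (torusTensor f) h‖ /
          ‖Fintype.linearCombination ℤ α h‖ := by
        have h_birkhoff := norm_birkhoffSum_sub_le (fun h => hα.resonance_ne_zero hc)
          h_summable h_summable_div N θ
        rw [mFourierCoeff_torusTensor f 0] at h_birkhoff
        exact h_birkhoff
    _ ≤ 1 / 2 * (K ^ Fintype.card ι * smallDivisorSum α ρ) :=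
        mul_le_mul_of_nonneg_left
          ((h_summable_div.tsum_le_tsum h_div h_major).trans_eq tsum_mul_left) (by norm_num)
    _ = _ := by ring

end TensorProducts

section SmoothArcs

open MeasureTheory FourierTransform Real
open scoped SchwartzMap ContDiff

lemma norm_fourier_comp_sub_div (g : ℝ → ℂ) {ε : ℝ} (hε : 0 < ε) (A w : ℝ) :
    ‖𝓕 (fun x => g ((x - A) / ε)) w‖ = ε * ‖𝓕 g (ε * w)‖ := by
  let F : ℝ → ℂ := fun y => (fourierChar (-(A * w)) : ℂ) * fourierChar (-(y * (ε * w))) • g y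
  have h_subst (x : ℝ) : fourierChar (-(x * w)) • g ((x - A) / ε) = F ((x - A) / ε) := by
    have h_arg : -(x * w) = -(A * w) + -((x - A) / ε * (ε * w)) := by
      field_simp
      ring
    simp only [F, h_arg, AddChar.map_add_eq_mul, Circle.smul_def, Circle.coe_mul, smul_eq_mul,
      mul_assoc]
  calc ‖𝓕 (fun x => g ((x - A) / ε)) w‖ = ‖∫ x, F ((x - A) / ε)‖ := by
        simp only [fourier_real_eq, h_subst]
    _ = ‖ε • ∫ y, F y‖ := by
        rw [integral_sub_right_eq_self (fun x => F (x / ε)), Measure.integral_comp_div,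
          abs_of_pos hε]
    _ = ε * ‖𝓕 g (ε * w)‖ := by
        rw [integral_const_mul, ← fourier_real_eq, norm_smul, norm_mul, Circle.norm_coe, one_mul,
          norm_of_nonneg hε.le]

lemma deriv_smoothTransition_eq_zero {x : ℝ} (hx : x ∉ Set.Icc (0 : ℝ) 1) :
    deriv smoothTransition x = 0 := by
  rcases lt_or_ge x 0 with h0 | h0
  · have h_zero : smoothTransition =ᶠ[nhds x] fun _ => 0 :=
      (eventually_lt_nhds h0).mono fun y hy => smoothTransition.zero_of_nonpos hy.le
    rw [h_zero.deriv_eq, deriv_const]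
  · have h1 : 1 < x := not_le.mp fun h1 => hx ⟨h0, h1⟩
    have h_one : smoothTransition =ᶠ[nhds x] fun _ => 1 :=
      (eventually_gt_nhds h1).mono fun y hy => smoothTransition.one_of_one_le hy.le
    rw [h_one.deriv_eq, deriv_const]

/-- The derivative of the smooth transition function, as a complex-valued test function. The decay
of its Fourier transform gives that of every plateau, by scaling. -/
noncomputable def smoothTransitionDeriv : 𝓢(ℝ, ℂ) :=
  HasCompactSupport.toSchwartzMap (f := fun x => ((deriv smoothTransition x : ℝ) : ℂ))
    (HasCompactSupport.intro isCompact_Icc fun x hx => by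
      rw [deriv_smoothTransition_eq_zero hx, Complex.ofReal_zero])
    (Complex.ofRealCLM.contDiff.comp
      (contDiff_infty_iff_deriv.mp smoothTransition.contDiff).2)

lemma smoothTransitionDeriv_apply (x : ℝ) :
    smoothTransitionDeriv x = (deriv smoothTransition x : ℝ) := rfl

/-- The smooth plateau from `A` to `B`: it vanishes outside `[A, B + ε]`, equals one on
`[A + ε, B]`, and has integral exactly `B - A`. -/
noncomputable def plateau (ε A B x : ℝ) : ℝ :=
  smoothTransition ((x - A) / ε) - smoothTransition ((x - B) / ε)

section Plateau

variable {ε A B x : ℝ}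

lemma plateau_eq_zero_of_le (hε : 0 < ε) (hAB : A ≤ B) (hx : x ≤ A) : plateau ε A B x = 0 := by
  rw [plateau, smoothTransition.zero_of_nonpos (div_nonpos_of_nonpos_of_nonneg (by linarith) hε.le),
    smoothTransition.zero_of_nonpos (div_nonpos_of_nonpos_of_nonneg (by linarith) hε.le), sub_zero]

lemma plateau_eq_zero_of_ge (hε : 0 < ε) (hAB : A ≤ B) (hx : B + ε ≤ x) :
    plateau ε A B x = 0 := by
  rw [plateau, smoothTransition.one_of_one_le ((one_le_div hε).mpr (by linarith)),
    smoothTransition.one_of_one_le ((one_le_div hε).mpr (by linarith)), sub_self]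

lemma plateau_eq_one (hε : 0 < ε) (hA : A + ε ≤ x) (hB : x ≤ B) : plateau ε A B x = 1 := by
  rw [plateau, smoothTransition.one_of_one_le ((one_le_div hε).mpr (by linarith)),
    smoothTransition.zero_of_nonpos (div_nonpos_of_nonpos_of_nonneg (by linarith) hε.le), sub_zero]

lemma plateau_nonneg (hε : 0 < ε) (hAB : A ≤ B) : 0 ≤ plateau ε A B x :=
  sub_nonneg.mpr (smoothTransition.monotone (by gcongr))

lemma plateau_le_one : plateau ε A B x ≤ 1 := by
  rw [plateau]
  linarith [smoothTransition.le_one ((x - A) / ε), smoothTransition.nonneg ((x - B) / ε)]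

lemma integral_plateau (hε : 0 < ε) (hAB : A ≤ B) : ∫ x, plateau ε A B x = B - A := by
  have h_int (c a b : ℝ) :
      IntervalIntegrable (fun x => smoothTransition ((x - c) / ε)) volume a b :=
    Continuous.intervalIntegrable (by fun_prop) a b
  have h_support : Function.support (plateau ε A B) ⊆ Set.Ioc A (B + ε) := fun x hx =>
    ⟨not_le.mp fun h => hx (plateau_eq_zero_of_le hε hAB h),
      (not_le.mp fun h => hx (plateau_eq_zero_of_ge hε hAB h)).le⟩
  have h_one : ∫ x in (A + ε)..(B + ε), smoothTransition ((x - A) / ε) = B - A := by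
    have h_congr : ∫ x in (A + ε)..(B + ε), smoothTransition ((x - A) / ε) =
        ∫ _x in (A + ε)..(B + ε), (1 : ℝ) := by
      refine intervalIntegral.integral_congr fun x hx => ?_
      rw [Set.uIcc_of_le (by linarith)] at hx
      exact smoothTransition.one_of_one_le ((one_le_div hε).mpr (by linarith [hx.1]))
    rw [h_congr, intervalIntegral.integral_const, smul_eq_mul]
    ring
  have h_zero : ∫ x in A..B, smoothTransition ((x - B) / ε) = 0 := by
    rw [← intervalIntegral.integral_zero (a := A) (b := B) (E := ℝ)]
    refine intervalIntegral.integral_congr fun x hx => ?_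
    rw [Set.uIcc_of_le hAB] at hx
    exact smoothTransition.zero_of_nonpos
      (div_nonpos_of_nonpos_of_nonneg (by linarith [hx.2]) hε.le)
  have h_transition : ∫ x in A..(A + ε), smoothTransition ((x - A) / ε) =
      ∫ x in B..(B + ε), smoothTransition ((x - B) / ε) := by
    rw [intervalIntegral.integral_comp_sub_right (fun x => smoothTransition (x / ε)),
      intervalIntegral.integral_comp_sub_right (fun x => smoothTransition (x / ε))]
    simp only [sub_self, add_sub_cancel_left]
  rw [← intervalIntegral.integral_eq_integral_of_support_subset h_support]
  simp only [plateau]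
  rw [intervalIntegral.integral_sub (h_int A _ _) (h_int B _ _),
    ← intervalIntegral.integral_add_adjacent_intervals (h_int A A (A + ε)) (h_int A _ _),
    ← intervalIntegral.integral_add_adjacent_intervals (h_int B A B) (h_int B _ _),
    h_one, h_zero, h_transition]
  ring

/-- `plateau ε A B` as a complex-valued test function, to which Fourier analysis applies. -/
noncomputable def plateauSchwartz (hε : 0 < ε) (hAB : A ≤ B) : 𝓢(ℝ, ℂ) :=
  HasCompactSupport.toSchwartzMap (f := fun x => (plateau ε A B x : ℂ))
    (HasCompactSupport.intro (isCompact_Icc (a := A) (b := B + ε)) fun x hx => by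
      rcases le_total x A with h | h
      · rw [plateau_eq_zero_of_le hε hAB h, Complex.ofReal_zero]
      · have h' : B + ε ≤ x := (not_le.mp fun h' => hx ⟨h, h'⟩).le
        rw [plateau_eq_zero_of_ge hε hAB h', Complex.ofReal_zero])
    (Complex.ofRealCLM.contDiff.comp
      ((smoothTransition.contDiff.comp (by fun_prop)).sub
        (smoothTransition.contDiff.comp (by fun_prop))))

lemma deriv_plateauSchwartz (hε : 0 < ε) (hAB : A ≤ B) :
    deriv (plateauSchwartz hε hAB) = fun x =>
      (ε⁻¹ : ℂ) * (smoothTransitionDeriv ((x - A) / ε) - smoothTransitionDeriv ((x - B) / ε)) := by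
  have h_diff (y : ℝ) : HasDerivAt smoothTransition (deriv smoothTransition y) y :=
    (smoothTransition.contDiff (n := 1)).differentiable (by norm_num) y |>.hasDerivAt
  have h_shift (c x : ℝ) : HasDerivAt (fun x => smoothTransition ((x - c) / ε))
      (deriv smoothTransition ((x - c) / ε) * (1 / ε)) x :=
    (h_diff _).comp x (((hasDerivAt_id x).sub_const c).div_const ε)
  funext x
  refine (((h_shift A x).sub (h_shift B x)).ofReal_comp.deriv).trans ?_
  rw [smoothTransitionDeriv_apply, smoothTransitionDeriv_apply]
  push_cast
  ring

lemma fourier_plateauSchwartz_zero (hε : 0 < ε) (hAB : A ≤ B) :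
    𝓕 (plateauSchwartz hε hAB : ℝ → ℂ) 0 = (B - A : ℝ) := by
  rw [← integral_plateau hε hAB, ← integral_complex_ofReal, fourier_real_eq]
  simp only [mul_zero, neg_zero, AddChar.map_zero_eq_one, one_smul]
  rfl

lemma norm_fourier_plateauSchwartz_le (hε : 0 < ε) (hAB : A ≤ B) {w : ℝ} (hw : w ≠ 0) :
    ‖𝓕 (plateauSchwartz hε hAB : ℝ → ℂ) w‖ ≤
      ‖𝓕 (smoothTransitionDeriv : ℝ → ℂ) (ε * w)‖ / |w| := by
  set P := plateauSchwartz hε hAB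
  let G : ℝ → ℝ → ℂ := fun c x => smoothTransitionDeriv ((x - c) / ε)
  have h_integrable (c : ℝ) : Integrable fun x => fourierChar (-(x * w)) • G c x := by
    have h_G : Integrable (G c) :=
      (smoothTransitionDeriv.integrable.comp_div hε.ne').comp_sub_right c
    simpa only [RCLike.inner_apply, conj_trivial, mul_comm] using
      (fourierIntegral_convergent_iff w).mpr h_G
  have h_deriv : 𝓕 (deriv P) w = (ε⁻¹ : ℂ) * (𝓕 (G A) w - 𝓕 (G B) w) := by
    rw [fourier_real_eq, fourier_real_eq, fourier_real_eq,
      ← integral_sub (h_integrable A) (h_integrable B), ← integral_const_mul]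
    simp only [P, G, deriv_plateauSchwartz, ← smul_sub, mul_smul_comm]
  have h_le : ‖𝓕 (deriv P) w‖ ≤ 2 * ‖𝓕 (smoothTransitionDeriv : ℝ → ℂ) (ε * w)‖ := by
    rw [h_deriv, norm_mul, norm_inv, Complex.norm_of_nonneg hε.le, inv_mul_le_iff₀ hε]
    refine (norm_sub_le _ _).trans (le_of_eq ?_)
    rw [norm_fourier_comp_sub_div _ hε, norm_fourier_comp_sub_div _ hε]
    ring
  have h_parts : 2 * π * |w| * ‖𝓕 (P : ℝ → ℂ) w‖ = ‖𝓕 (deriv P) w‖ := by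
    rw [fourier_deriv P.integrable P.differentiable (SchwartzMap.derivCLM ℂ ℂ P).integrable]
    simp only [norm_smul, norm_mul, Complex.norm_I, Complex.norm_real, Complex.norm_ofNat,
      norm_eq_abs, abs_of_pos pi_pos, mul_one]
  rw [le_div_iff₀ (abs_pos.mpr hw)]
  have h_nonneg : 0 ≤ |w| * ‖𝓕 (P : ℝ → ℂ) w‖ := by positivity
  nlinarith [pi_gt_three]

end Plateau

lemma exists_rpow_mul_norm_le (f : 𝓢(ℝ, ℂ)) {σ : ℝ} (hσ : 0 ≤ σ) :
    ∃ C : ℝ, ∀ x, |x| ^ σ * ‖f x‖ ≤ C := by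
  obtain ⟨k, hk⟩ := exists_nat_ge σ
  obtain ⟨C₀, -, hC₀⟩ := f.decay 0 0
  obtain ⟨C₁, -, hC₁⟩ := f.decay k 0
  refine ⟨C₀ + C₁, fun x => ?_⟩
  have h_pow : |x| ^ σ ≤ 1 + |x| ^ k := by
    rcases le_total |x| 1 with hx | hx
    · exact (rpow_le_one (abs_nonneg x) hx hσ).trans (le_add_of_nonneg_right (by positivity))
    · rw [← rpow_natCast]
      exact (rpow_le_rpow_of_exponent_le hx hk).trans (le_add_of_nonneg_left zero_le_one)
  have h₀ := hC₀ x
  have h₁ := hC₁ x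
  rw [norm_iteratedFDeriv_zero, norm_eq_abs] at h₀ h₁
  calc |x| ^ σ * ‖f x‖ ≤ (1 + |x| ^ k) * ‖f x‖ := by gcongr
    _ ≤ C₀ + C₁ := by linarith

lemma exists_norm_fourier_plateauSchwartz_le {σ : ℝ} (hσ : 0 ≤ σ) :
    ∃ C : ℝ, 0 ≤ C ∧ ∀ {ε A B : ℝ} (hε : 0 < ε) (hAB : A ≤ B), ε ≤ 1 → B - A ≤ 2 → ∀ n : ℤ,
      ‖𝓕 (plateauSchwartz hε hAB : ℝ → ℂ) n‖ ≤
        C * ε ^ (-σ) * max |(n : ℝ)| 1 ^ (-(1 + σ)) := by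
  obtain ⟨C, hC⟩ := exists_rpow_mul_norm_le (𝓕 smoothTransitionDeriv) hσ
  refine ⟨max C 2, by positivity, fun {ε A B} hε hAB hε1 hBA n => ?_⟩
  rcases eq_or_ne n 0 with rfl | hn
  · rw [Int.cast_zero, fourier_plateauSchwartz_zero, Complex.norm_of_nonneg (sub_nonneg.mpr hAB),
      abs_zero, max_eq_right zero_le_one, one_rpow, mul_one]
    have h_one : 1 ≤ ε ^ (-σ) := one_le_rpow_of_pos_of_le_one_of_nonpos hε hε1 (neg_nonpos.mpr hσ)
    nlinarith [le_max_right C 2]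
  · have hn_abs : 1 ≤ |(n : ℝ)| := by exact_mod_cast Int.one_le_abs hn
    have hn_pos : 0 < |(n : ℝ)| := by linarith
    have h_decay := hC (ε * n)
    rw [SchwartzMap.fourier_coe, abs_mul, abs_of_pos hε, mul_rpow hε.le hn_pos.le] at h_decay
    rw [max_eq_left hn_abs]
    calc _ ≤ _ := norm_fourier_plateauSchwartz_le hε hAB (Int.cast_ne_zero.mpr hn)
      _ ≤ C * (ε ^ (-σ) * |(n : ℝ)| ^ (-σ)) / |(n : ℝ)| := by
          gcongr
          rw [rpow_neg hε.le, rpow_neg hn_pos.le, ← mul_inv, ← div_eq_mul_inv,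
            le_div_iff₀ (by positivity), mul_comm]
          exact h_decay
      _ = C * ε ^ (-σ) * |(n : ℝ)| ^ (-(1 + σ)) := by
          rw [neg_add, rpow_add hn_pos, rpow_neg_one]
          ring
      _ ≤ _ := by
          gcongr
          exact le_max_left C 2

/-- The periodization `x ↦ ∑ₖ f(x + k)` of a test function, as a function on the circle. Its
Fourier coefficients are the values of the Fourier transform of `f` at the integers. -/
noncomputable def periodize (f : 𝓢(ℝ, ℂ)) : C(UnitAddCircle, ℂ) where
  toFun := ((f : C(ℝ, ℂ)).periodic_tsum_comp_add_zsmul 1).lift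
  continuous_toFun := continuous_coinduced_dom.mpr (map_continuous _)

lemma summable_norm_restrict_comp_addRight (f : 𝓢(ℝ, ℂ)) (K : TopologicalSpace.Compacts ℝ) :
    Summable fun k : ℤ => ‖((f : C(ℝ, ℂ)).comp (ContinuousMap.addRight k)).restrict K‖ :=
  summable_of_isBigO (Real.summable_abs_int_rpow one_lt_two)
    ((isBigO_norm_restrict_cocompact (f : C(ℝ, ℂ)) two_pos
      (f.isBigO_cocompact_rpow (-2)) K).comp_tendsto Int.tendsto_coe_cofinite)

lemma hasSum_periodize (f : 𝓢(ℝ, ℂ)) (x : ℝ) :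
    HasSum (fun k : ℤ => f (x + k)) (periodize f x) := by
  simpa only [periodize, ContinuousMap.coe_mk, Function.Periodic.lift_coe, zsmul_one] using!
    ContinuousMap.hasSum_apply (ContinuousMap.summable_of_locally_summable_norm
      (summable_norm_restrict_comp_addRight f)).hasSum x

lemma fourierCoeff_periodize (f : 𝓢(ℝ, ℂ)) (n : ℤ) :
    fourierCoeff (periodize f) n = 𝓕 (f : ℝ → ℂ) n :=
  Real.fourierCoeff_tsum_comp_add (summable_norm_restrict_comp_addRight f) n

/-- The periodization of `plateau ε A B`: a smoothed indicator of an arc of the circle, read as a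
function on the line. -/
noncomputable def periodicPlateau (ε A B x : ℝ) : ℝ := ∑' k : ℤ, plateau ε A B (x + k)

section PeriodicPlateau

variable {ε a b A B : ℝ}

lemma periodize_plateauSchwartz (hε : 0 < ε) (hAB : A ≤ B) (x : ℝ) :
    periodize (plateauSchwartz hε hAB) x = periodicPlateau ε A B x :=
  (hasSum_periodize _ x).tsum_eq.symm.trans
    (Complex.ofReal_tsum fun k : ℤ => plateau ε A B (x + k)).symm

lemma summable_plateau_add_intCast (hε : 0 < ε) (hAB : A ≤ B) (x : ℝ) :
    Summable fun k : ℤ => plateau ε A B (x + k) :=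
  Complex.summable_ofReal.mp (hasSum_periodize (plateauSchwartz hε hAB) x).summable

lemma periodicPlateau_nonneg (hε : 0 < ε) (hAB : A ≤ B) (x : ℝ) : 0 ≤ periodicPlateau ε A B x :=
  tsum_nonneg fun _ => plateau_nonneg hε hAB

lemma plateau_fract_le_periodicPlateau (hε : 0 < ε) (hAB : A ≤ B) (x : ℝ) :
    plateau ε A B (Int.fract x) ≤ periodicPlateau ε A B x := by
  have h_le := (summable_plateau_add_intCast hε hAB x).le_tsum (-⌊x⌋) fun _ _ =>
    plateau_nonneg hε hAB
  rwa [Int.cast_neg, ← sub_eq_add_neg, Int.self_sub_floor] at h_le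

lemma periodicPlateau_eq_plateau_fract (hε : 0 < ε) (hA : 0 ≤ A) (hAB : A ≤ B) (hB : B + ε ≤ 1)
    (x : ℝ) : periodicPlateau ε A B x = plateau ε A B (Int.fract x) := by
  rw [periodicPlateau, tsum_eq_single (-⌊x⌋), Int.cast_neg, ← sub_eq_add_neg, Int.self_sub_floor]
  intro k hk
  rcases lt_or_gt_of_ne hk with h | h
  · have h_floor : (k : ℝ) ≤ -⌊x⌋ - 1 := by exact_mod_cast Int.le_sub_one_of_lt h
    exact plateau_eq_zero_of_le hε hAB (by linarith [Int.lt_floor_add_one x])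
  · have h_floor : -(⌊x⌋ : ℝ) + 1 ≤ k := by exact_mod_cast Int.add_one_le_of_lt h
    exact plateau_eq_zero_of_ge hε hAB (by linarith [Int.floor_le x])

lemma indicator_Ico_fract_le_periodicPlateau (hε : 0 < ε) (hab : a ≤ b) (x : ℝ) :
    (Set.Ico a b).indicator 1 (Int.fract x) ≤ periodicPlateau ε (a - ε) b x := by
  have hAB : a - ε ≤ b := by linarith
  refine Set.indicator_apply_le' (fun hx => ?_) (fun _ => periodicPlateau_nonneg hε hAB x)
  rw [Pi.one_apply, ← plateau_eq_one hε (sub_add_cancel a ε ▸ hx.1) hx.2.le]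
  exact plateau_fract_le_periodicPlateau hε hAB x

lemma periodicPlateau_le_indicator_Ico_fract (hε : 0 < ε) (ha : 0 ≤ a) (hb : b ≤ 1) (x : ℝ) :
    periodicPlateau ε a (max a (b - ε)) x ≤ (Set.Ico a b).indicator 1 (Int.fract x) := by
  rcases le_total (b - ε) a with h | h
  · simp only [max_eq_left h, periodicPlateau, plateau, sub_self, tsum_zero]
    exact Set.indicator_nonneg (fun _ _ => zero_le_one) _
  · rw [max_eq_right h, periodicPlateau_eq_plateau_fract hε ha h (by linarith)]
    by_cases hx : Int.fract x ∈ Set.Ico a b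
    · rw [Set.indicator_of_mem hx]
      exact plateau_le_one
    · rw [Set.indicator_of_notMem hx]
      rcases lt_or_ge (Int.fract x) a with hxa | hxa
      · exact (plateau_eq_zero_of_le hε h hxa.le).le
      · exact (plateau_eq_zero_of_ge hε h
          (by linarith [not_lt.mp fun hxb => hx ⟨hxa, hxb⟩])).le

end PeriodicPlateau

end SmoothArcs

section Discrepancy

variable {ι : Type*}

lemma prod_le_prod_add_of_le_add (s : Finset ι) {u v : ι → ℝ} {η : ℝ} (hη : 0 ≤ η) (hη1 : η ≤ 1)
    (hu0 : ∀ i, 0 ≤ u i) (hu1 : ∀ i, u i ≤ 1) (hv0 : ∀ i, 0 ≤ v i) (hvu : ∀ i, v i ≤ u i + η) :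
    ∏ i ∈ s, v i ≤ ∏ i ∈ s, u i + (2 ^ s.card - 1) * η := by
  induction s using Finset.cons_induction with
  | empty => simp
  | cons i s hi ih =>
    have h_prod : ∏ j ∈ s, u j ≤ 1 := Finset.prod_le_one (fun j _ => hu0 j) fun j _ => hu1 j
    have h_pow : 0 ≤ (2 ^ s.card - 1) * η :=
      mul_nonneg (sub_nonneg.mpr (one_le_pow₀ one_le_two)) hη
    rw [Finset.prod_cons, Finset.prod_cons, Finset.card_cons, pow_succ]
    calc v i * ∏ j ∈ s, v j
        ≤ (u i + η) * (∏ j ∈ s, u j + (2 ^ s.card - 1) * η) :=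
          mul_le_mul (hvu i) ih (Finset.prod_nonneg fun j _ => hv0 j) (add_nonneg (hu0 i) hη)
      _ = u i * ∏ j ∈ s, u j + η * ∏ j ∈ s, u j + (u i + η) * ((2 ^ s.card - 1) * η) := by ring
      _ ≤ u i * ∏ j ∈ s, u j + η * 1 + 2 * ((2 ^ s.card - 1) * η) := by
          gcongr
          linarith [hu1 i]
      _ = u i * ∏ j ∈ s, u j + (2 ^ s.card * 2 - 1) * η := by ring

variable [Fintype ι]

lemma distZ_sum_mul_eq_norm (α : ι → ℝ) (h : ι → ℤ) :
    distZ (∑ j, h j * α j) =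
      ‖Fintype.linearCombination ℤ (fun j => (α j : UnitAddCircle)) h‖ := by
  rw [distZ, ← UnitAddCircle.norm_eq, Fintype.linearCombination_apply]
  congr 1
  simp only [← zsmul_eq_mul, ← AddCircle.coe_zsmul]
  exact map_sum (QuotientAddGroup.mk' _) _ _

lemma isDiophantine_coe_iff {α : ι → ℝ} {c τ : ℝ} :
    IsDiophantine (fun j => (α j : UnitAddCircle)) c τ ↔
      ∀ h : ι → ℤ, h ≠ 0 → c / (∏ j, max |(h j : ℝ)| 1) ^ τ ≤ distZ (∑ j, h j * α j) := by
  simp only [IsDiophantine, multHeight, distZ_sum_mul_eq_norm]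

theorem IsDiophantine.exists_abs_sum_prod_periodicPlateau_sub_le {α : ι → ℝ} {c τ σ : ℝ}
    (hα : IsDiophantine (fun j => (α j : UnitAddCircle)) c τ) (hc : 0 < c) (hτ : 0 < τ)
    (hσ : 0 ≤ σ) (hτσ : τ < 1 + σ) :
    ∃ K : ℝ, 0 ≤ K ∧ ∀ ε : ℝ, 0 < ε → ε ≤ 1 → ∀ A B : ι → ℝ, (∀ j, A j ≤ B j) →
      (∀ j, B j - A j ≤ 2) → ∀ (N : ℕ) (θ : ι → ℝ),
      |∑ n ∈ Finset.range N, ∏ j, periodicPlateau ε (A j) (B j) (θ j + n * α j) -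
          N * ∏ j, (B j - A j)| ≤ K * (ε ^ (-σ)) ^ Fintype.card ι := by
  obtain ⟨C, hC, h_decay⟩ := exists_norm_fourier_plateauSchwartz_le hσ
  refine ⟨1 / 2 * C ^ Fintype.card ι * smallDivisorSum (fun j => (α j : UnitAddCircle)) (1 + σ),
    mul_nonneg (by positivity) (smallDivisorSum_nonneg _ _), fun ε hε hε1 A B hAB hBA N θ => ?_⟩
  let f : ι → C(UnitAddCircle, ℂ) := fun j => periodize (plateauSchwartz hε (hAB j))
  have h_coeff (j : ι) (n : ℤ) :
      ‖fourierCoeff (f j) n‖ ≤ C * ε ^ (-σ) * max |(n : ℝ)| 1 ^ (-(1 + σ)) := by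
    rw [fourierCoeff_periodize]
    exact h_decay hε (hAB j) hε1 (hBA j) n
  have h_mean (j : ι) : fourierCoeff (f j) 0 = (B j - A j : ℝ) := by
    rw [fourierCoeff_periodize, Int.cast_zero, fourier_plateauSchwartz_zero]
  have h_apply (n : ℕ) (j : ι) :
      f j ((θ j : UnitAddCircle) + n • (α j : UnitAddCircle)) =
        periodicPlateau ε (A j) (B j) (θ j + n * α j) := by
    rw [← nsmul_eq_mul, ← periodize_plateauSchwartz hε (hAB j)]
    rfl
  have h_bound := hα.norm_birkhoffSum_torusTensor_sub_le hc hτ hτσ h_coeff N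
    fun j => (θ j : UnitAddCircle)
  simp only [h_apply, h_mean] at h_bound
  calc _ = _ := by
        rw [← Real.norm_eq_abs, ← Complex.norm_real]
        push_cast
        rfl
    _ ≤ _ := h_bound
    _ = _ := by
        rw [mul_pow]
        ring

/-- The number of `n < N` for which the orbit point `θ + nα`, reduced modulo one, lies in the
half-open box with lower corner `a` and upper corner `b`. -/
noncomputable def boxVisits (α θ a b : ι → ℝ) (N : ℕ) : ℝ :=
  ∑ n ∈ Finset.range N, Set.indicator {y : ι → ℝ | ∀ i, a i ≤ y i ∧ y i < b i} (fun _ => (1 : ℝ))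
    fun i => Int.fract (θ i + n * α i)

lemma boxVisits_eq_sum_prod (α θ a b : ι → ℝ) (N : ℕ) :
    boxVisits α θ a b N = ∑ n ∈ Finset.range N,
      ∏ i, (Set.Ico (a i) (b i)).indicator (1 : ℝ → ℝ) (Int.fract (θ i + n * α i)) := by
  have h_box : {y : ι → ℝ | ∀ i, a i ≤ y i ∧ y i < b i} =
      ((Finset.univ : Finset ι) : Set ι).pi fun i => Set.Ico (a i) (b i) := by
    ext y
    simp
  simp only [boxVisits, h_box, ← Set.indicator_pi_one_apply]
  rfl

section Sandwich

variable {α a b : ι → ℝ} {ε : ℝ}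

lemma boxVisits_le_sum_prod_periodicPlateau (hε : 0 < ε) (hab : ∀ i, a i ≤ b i) (N : ℕ)
    (θ : ι → ℝ) : boxVisits α θ a b N ≤ ∑ n ∈ Finset.range N,
      ∏ i, periodicPlateau ε (a i - ε) (b i) (θ i + n * α i) := by
  rw [boxVisits_eq_sum_prod]
  exact Finset.sum_le_sum fun n _ => Finset.prod_le_prod
    (fun i _ => Set.indicator_nonneg (fun _ _ => zero_le_one) _)
    fun i _ => indicator_Ico_fract_le_periodicPlateau hε (hab i) _

lemma sum_prod_periodicPlateau_le_boxVisits (hε : 0 < ε) (ha : ∀ i, 0 ≤ a i)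
    (hb : ∀ i, b i ≤ 1) (N : ℕ) (θ : ι → ℝ) : ∑ n ∈ Finset.range N,
      ∏ i, periodicPlateau ε (a i) (max (a i) (b i - ε)) (θ i + n * α i) ≤
        boxVisits α θ a b N := by
  rw [boxVisits_eq_sum_prod]
  exact Finset.sum_le_sum fun n _ => Finset.prod_le_prod
    (fun i _ => periodicPlateau_nonneg hε (le_max_left _ _) _)
    fun i _ => periodicPlateau_le_indicator_Ico_fract hε (ha i) (hb i) _

end Sandwich

theorem IsDiophantine.exists_abs_boxVisits_sub_le {α : ι → ℝ} {c τ σ : ℝ}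
    (hα : IsDiophantine (fun j => (α j : UnitAddCircle)) c τ) (hc : 0 < c) (hτ : 0 < τ)
    (hσ : 0 ≤ σ) (hτσ : τ < 1 + σ) :
    ∃ K : ℝ, ∀ ε : ℝ, 0 < ε → ε ≤ 1 → ∀ (N : ℕ) (θ a b : ι → ℝ),
      (∀ i, 0 ≤ a i ∧ a i ≤ b i ∧ b i ≤ 1) →
      |boxVisits α θ a b N - N * ∏ i, (b i - a i)| ≤
        K * (N * ε + (ε ^ (-σ)) ^ Fintype.card ι) := by
  obtain ⟨K, hK, h_smooth⟩ := hα.exists_abs_sum_prod_periodicPlateau_sub_le hc hτ hσ hτσ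
  set D : ℝ := 2 ^ Fintype.card ι - 1
  have hD : 0 ≤ D := sub_nonneg.mpr (one_le_pow₀ one_le_two)
  refine ⟨D + K, fun ε hε hε1 N θ a b hab => ?_⟩
  have h_max_le (i : ι) : max (a i) (b i - ε) ≤ b i :=
    max_le (hab i).2.1 (sub_le_self (b i) hε.le)
  have h_smooth_outer := h_smooth ε hε hε1 (fun i => a i - ε) b
    (fun i => by linarith [hab i]) (fun i => by linarith [hab i]) N θ
  have h_smooth_inner := h_smooth ε hε hε1 a (fun i => max (a i) (b i - ε))
    (fun i => le_max_left _ _) (fun i => by linarith [h_max_le i, hab i]) N θ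
  have h_outer : ∏ i, (b i - (a i - ε)) ≤ ∏ i, (b i - a i) + D * ε :=
    prod_le_prod_add_of_le_add Finset.univ hε.le hε1 (fun i => by linarith [hab i])
      (fun i => by linarith [hab i]) (fun i => by linarith [hab i]) fun i => by linarith
  have h_inner : ∏ i, (b i - a i) ≤ ∏ i, (max (a i) (b i - ε) - a i) + D * ε :=
    prod_le_prod_add_of_le_add Finset.univ hε.le hε1
      (fun i => sub_nonneg.mpr (le_max_left _ _)) (fun i => by linarith [h_max_le i, hab i])
      (fun i => by linarith [hab i]) fun i => by linarith [le_max_right (a i) (b i - ε)]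
  have h_visits_le := boxVisits_le_sum_prod_periodicPlateau (α := α) hε (fun i => (hab i).2.1) N θ
  have h_le_visits := sum_prod_periodicPlateau_le_boxVisits (α := α) hε (fun i => (hab i).1)
    (fun i => (hab i).2.2) N θ
  have h_scale_outer := mul_le_mul_of_nonneg_left h_outer N.cast_nonneg'
  have h_scale_inner := mul_le_mul_of_nonneg_left h_inner N.cast_nonneg'
  have h_cross : 0 ≤ D * (ε ^ (-σ)) ^ Fintype.card ι + K * (N * ε) := by positivity
  rw [abs_le] at h_smooth_outer h_smooth_inner ⊢
  constructor <;> linarith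

theorem IsDiophantine.exists_discrepancy_le {α : ι → ℝ} {c τ σ : ℝ}
    (hα : IsDiophantine (fun j => (α j : UnitAddCircle)) c τ) (hc : 0 < c) (hτ : 0 < τ)
    (hσ : 0 ≤ σ) (hτσ : τ < 1 + σ) :
    ∃ K : ℝ, ∀ N : ℕ, 0 < N → ∀ θ a b : ι → ℝ, (∀ i, 0 ≤ a i ∧ a i ≤ b i ∧ b i ≤ 1) →
      |boxVisits α θ a b N / N - ∏ i, (b i - a i)| ≤
        K * (N : ℝ) ^ (-(1 / (Fintype.card ι * σ + 1))) := by
  obtain ⟨K, h_visits⟩ := hα.exists_abs_boxVisits_sub_le hc hτ hσ hτσ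
  refine ⟨2 * K, fun N hN θ a b hab => ?_⟩
  set β : ℝ := 1 / (Fintype.card ι * σ + 1) with hβ
  have hN0 : (0 : ℝ) < N := Nat.cast_pos.mpr hN
  have hN1 : (1 : ℝ) ≤ N := Nat.one_le_cast.mpr hN
  have hβ0 : 0 < β := by positivity
  -- The two errors `N * ε` and `ε ^ (-dσ)` balance at `ε = N ^ (-β)`.
  have h_balance : (((N : ℝ) ^ (-β)) ^ (-σ)) ^ Fintype.card ι = N * (N : ℝ) ^ (-β) := by
    rw [← Real.rpow_mul hN0.le, ← Real.rpow_mul_natCast hN0.le,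
      mul_comm (N : ℝ), ← Real.rpow_add_one hN0.ne']
    congr 1
    rw [hβ]
    field_simp
    ring
  have h_error := h_visits ((N : ℝ) ^ (-β)) (by positivity)
    (Real.rpow_le_one_of_one_le_of_nonpos hN1 (neg_nonpos.mpr hβ0.le)) N θ a b hab
  rw [h_balance] at h_error
  calc |boxVisits α θ a b N / N - ∏ i, (b i - a i)|
      = |boxVisits α θ a b N - N * ∏ i, (b i - a i)| / N := by
        rw [div_sub' hN0.ne', abs_div, abs_of_pos hN0]
    _ ≤ 2 * K * (N : ℝ) ^ (-β) := by
        rw [div_le_iff₀ hN0]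
        linarith

lemma exists_smoothness_exponent {d : ℕ} {τ δ : ℝ} (hτ : 1 ≤ τ) (hδ : 0 < δ)
    (hδτ : δ < 1 / (d * (τ - 1) + 1)) :
    ∃ σ : ℝ, 0 ≤ σ ∧ τ < 1 + σ ∧ δ < 1 / (d * σ + 1) := by
  have h_denominator : (0 : ℝ) < d * (τ - 1) + 1 := by
    linarith [mul_nonneg d.cast_nonneg' (sub_nonneg.mpr hτ)]
  set g : ℝ := 1 / δ - (d * (τ - 1) + 1)
  have h_gap : 0 < g := sub_pos.mpr ((lt_one_div hδ h_denominator).mp hδτ)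
  have h_step : 0 < g / (d + 1) := by positivity
  refine ⟨τ - 1 + g / (d + 1), by linarith, by linarith, ?_⟩
  have h_lt : d * (g / (d + 1)) < g := by
    rw [mul_div_left_comm]
    exact mul_lt_of_lt_one_right h_gap ((div_lt_one (by positivity)).mpr (lt_add_one _))
  rw [lt_one_div hδ (by positivity)]
  linarith

theorem diophantine_rotation_discrepancy_general {α : ι → ℝ} {c τ : ℝ} (hc : 0 < c)
    (hτ : 1 ≤ τ) (hα : IsDiophantine (fun j => (α j : UnitAddCircle)) c τ) {δ : ℝ} (hδ : 0 < δ)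
    (hδτ : δ < 1 / (Fintype.card ι * (τ - 1) + 1)) :
    ∃ N₀ : ℕ, ∀ N : ℕ, N₀ ≤ N → ∀ θ a b : ι → ℝ, (∀ i, 0 ≤ a i ∧ a i ≤ b i ∧ b i ≤ 1) →
      |boxVisits α θ a b N / N - ∏ i, (b i - a i)| ≤ (N : ℝ) ^ (-δ) := by
  obtain ⟨σ, hσ, hτσ, hδσ⟩ := exists_smoothness_exponent hτ hδ hδτ
  obtain ⟨K, hK⟩ := hα.exists_discrepancy_le hc (zero_lt_one.trans_le hτ) hσ hτσ
  set β : ℝ := 1 / (Fintype.card ι * σ + 1)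
  have h_large : ∀ᶠ N : ℕ in Filter.atTop, K ≤ (N : ℝ) ^ (β - δ) :=
    ((tendsto_rpow_atTop (sub_pos.mpr hδσ)).comp tendsto_natCast_atTop_atTop).eventually_ge_atTop K
  obtain ⟨N₀, hN₀⟩ := Filter.eventually_atTop.mp (h_large.and (Filter.eventually_gt_atTop 0))
  refine ⟨N₀, fun N hN θ a b hab => (hK N (hN₀ N hN).2 θ a b hab).trans ?_⟩
  have h_pos : (0 : ℝ) < N := Nat.cast_pos.mpr (hN₀ N hN).2
  calc K * (N : ℝ) ^ (-β) ≤ (N : ℝ) ^ (β - δ) * (N : ℝ) ^ (-β) := by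
        gcongr
        exact (hN₀ N hN).1
    _ = (N : ℝ) ^ (-δ) := by
        rw [← Real.rpow_add h_pos]
        ring_nf

end Discrepancy

/-- Diophantine rotation on `𝕋^d` has polynomially small discrepancy: if
`‖⟨h,α⟩‖ ≥ c / r(h)^τ` for all nonzero `h ∈ ℤ^d` (with `r(h) = ∏ max(|h_j|,1)`, `τ > 1`),
then for any `0 < δ < 1/(d(τ-1)+1)` and all large `N`, uniformly in `θ`, the box
discrepancy of `{θ + nα}_{n=0}^{N-1}` is at most `N^{-δ}`. -/
theorem diophantine_rotation_discrepancy (d : ℕ) (hd : 1 ≤ d) (α : Fin d → ℝ)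
    (c τ : ℝ) (hc : 0 < c) (hτ : 1 < τ)
    (hDC : ∀ h : Fin d → ℤ, h ≠ 0 →
      c / (∏ j, max (|(h j : ℝ)|) 1) ^ τ ≤ distZ (∑ j, (h j : ℝ) * α j)) :
    ∀ δ : ℝ, 0 < δ → δ < 1 / (d * (τ - 1) + 1) →
      ∃ N₀ : ℕ, ∀ N : ℕ, N₀ ≤ N → ∀ θ : Fin d → ℝ,
        ∀ a b : Fin d → ℝ, (∀ i, 0 ≤ a i ∧ a i ≤ b i ∧ b i ≤ 1) →
          |(∑ n ∈ Finset.range N,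
              Set.indicator {y : Fin d → ℝ | ∀ i, a i ≤ y i ∧ y i < b i}
                (fun _ => (1 : ℝ)) (fun i => Int.fract (θ i + n * α i))) / (N : ℝ) -
            ∏ i, (b i - a i)| ≤ (N : ℝ) ^ (-δ) := by
  intro δ hδ hδτ
  exact diophantine_rotation_discrepancy_general hc hτ.le (isDiophantine_coe_iff.mpr hDC) hδ <| by
    rwa [Fintype.card_fin]
end
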